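/- arXiv:math/0506046 — 2 statements merged into one kernel-verified Lean document; each statement's English description precedes it below -/
import Mathlib

section
/- Let F be an algebraically closed field of characteristic different from 2 and n ≥ 1. Let H(F_n) denote the space of symmetric n×n matrices over F with the Jordan product x∘y = (xy+yx)/2. Then H(F_n) ≠ A + B for any two proper simple Jordan subalgebras A and B of H(F_n). -/
open Matrix

namespace HFn

variable (F : Type*) [Field F]

/-- `H(F_k)`: the space of symmetric `k×k` matrices over `F`. -/
def symSub (k : ℕ) : Submodule F (Matrix (Fin k) (Fin k) F) where
  carrier := {X | Xᵀ = X}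
  zero_mem' := Matrix.transpose_zero
  add_mem' := by
    intro a b (ha : aᵀ = a) (hb : bᵀ = b)
    show (a + b)ᵀ = a + b
    rw [Matrix.transpose_add, ha, hb]
  smul_mem' := by
    intro c a (ha : aᵀ = a)
    show (c • a)ᵀ = c • a
    rw [Matrix.transpose_smul, ha]

variable {F}

/-- The Jordan product `x∘y = (xy+yx)/2`. -/
def jp {k : ℕ} (X Y : Matrix (Fin k) (Fin k) F) : Matrix (Fin k) (Fin k) F :=
  (2 : F)⁻¹ • (X * Y + Y * X)

variable (F)

/-- A simple Jordan subalgebra of `H(F_n)`: `A∘A ≠ 0` and the only subspaces `I ⊆ A`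
with `A∘I ⊆ I` are `0` and `A`. -/
def IsSimpleJordan {k : ℕ} (A : Submodule F (Matrix (Fin k) (Fin k) F)) : Prop :=
  (∃ x ∈ A, ∃ y ∈ A, jp x y ≠ 0) ∧
  ∀ I : Submodule F (Matrix (Fin k) (Fin k) F), I ≤ A →
    (∀ x ∈ A, ∀ y ∈ I, jp x y ∈ I) → I = ⊥ ∨ I = A


section Basics

variable {F : Type*} [Field F] {n : ℕ}

/-- closed under the unnormalized Jordan product -/
def JC (A : Submodule F (Matrix (Fin n) (Fin n) F)) : Prop :=
  ∀ x ∈ A, ∀ y ∈ A, x * y + y * x ∈ A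

lemma half_mem {A : Submodule F (Matrix (Fin n) (Fin n) F)} (h2 : (2 : F) ≠ 0)
    {x : Matrix (Fin n) (Fin n) F} (h : x + x ∈ A) : x ∈ A := by
  have := A.smul_mem (2 : F)⁻¹ h
  rwa [← two_smul F x, smul_smul, inv_mul_cancel₀ h2, one_smul] at this

lemma JC.sq {A : Submodule F (Matrix (Fin n) (Fin n) F)} (h2 : (2 : F) ≠ 0) (h : JC A)
    {x : Matrix (Fin n) (Fin n) F} (hx : x ∈ A) : x * x ∈ A :=
  half_mem h2 (h x hx x hx)

lemma JC.U {A : Submodule F (Matrix (Fin n) (Fin n) F)} (h2 : (2 : F) ≠ 0) (h : JC A)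
    {x y : Matrix (Fin n) (Fin n) F} (hx : x ∈ A) (hy : y ∈ A) : x * y * x ∈ A := by
  apply half_mem h2
  have h1 := h x hx _ (h x hx y hy)
  have h3 := h _ (h.sq h2 hx) y hy
  have := A.sub_mem h1 h3
  convert this using 1
  noncomm_ring

lemma JC.T {A : Submodule F (Matrix (Fin n) (Fin n) F)} (h2 : (2 : F) ≠ 0) (h : JC A)
    {x y z : Matrix (Fin n) (Fin n) F} (hx : x ∈ A) (hy : y ∈ A) (hz : z ∈ A) :
    x * y * z + z * y * x ∈ A := by
  have h1 := h.U h2 (A.add_mem hx hz) hy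
  have := A.sub_mem (A.sub_mem h1 (h.U h2 hx hy)) (h.U h2 hz hy)
  convert this using 1
  noncomm_ring

/-- `(1+tb)c(1+tb)` -/
lemma JC.U1 {A : Submodule F (Matrix (Fin n) (Fin n) F)} (h2 : (2 : F) ≠ 0) (h : JC A)
    {b c : Matrix (Fin n) (Fin n) F} (hb : b ∈ A) (hc : c ∈ A) :
    (1 + b) * c * (1 + b) ∈ A := by
  have := A.add_mem (A.add_mem hc (h b hb c hc)) (h.U h2 hb hc)
  convert this using 1
  noncomm_ring

/-- absolute zero divisors with square zero -/
def Sg (A : Submodule F (Matrix (Fin n) (Fin n) F)) : Set (Matrix (Fin n) (Fin n) F) :=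
  {z | z ∈ A ∧ z * z = 0 ∧ ∀ a ∈ A, z * a * z = 0}

lemma Sg_alt {A : Submodule F (Matrix (Fin n) (Fin n) F)} (h : JC A)
    {z a b : Matrix (Fin n) (Fin n) F} (hz : z ∈ Sg A) (ha : a ∈ A) (hb : b ∈ A) :
    z * a * b * z = - (z * b * a * z) := by
  have := hz.2.2 _ (h a ha b hb)
  rw [eq_neg_iff_add_eq_zero, ← this]
  noncomm_ring

lemma Sg_mul {A : Submodule F (Matrix (Fin n) (Fin n) F)} (h : JC A)
    {z w : Matrix (Fin n) (Fin n) F} (hz : z ∈ Sg A) (hw : w ∈ Sg A) :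
    z * w + w * z ∈ Sg A := by
  have hzw := hz.2.2 w hw.1
  have hwz := hw.2.2 z hz.1
  refine ⟨h z hz.1 w hw.1, ?_, ?_⟩
  · have : (z * w + w * z) * (z * w + w * z)
      = (z * w * z) * w + z * (w * w) * z + w * (z * z) * w + (w * z * w) * z := by noncomm_ring
    rw [this, hzw, hwz, hz.2.1, hw.2.1]; simp
  · intro b hb
    have e1 := Sg_alt h hz hw.1 hb
    have e2 := Sg_alt h hw hz.1 hb
    have : (z * w + w * z) * b * (z * w + w * z)
      = (z * w * b * z) * w + z * (w * b * w) * z + w * (z * b * z) * w + (w * z * b * w) * z := by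
        noncomm_ring
    rw [this, hw.2.2 b hb, hz.2.2 b hb, e1, e2]
    have : -(z * b * w * z) * w + z * 0 * z + w * 0 * w + -(w * b * z * w) * z
      = - (z * b * (w * z * w)) - w * b * (z * w * z) := by noncomm_ring
    rw [this, hzw, hwz]; simp

lemma Sg_smul {A : Submodule F (Matrix (Fin n) (Fin n) F)}
    {z : Matrix (Fin n) (Fin n) F} (c : F) (hz : z ∈ Sg A) : c • z ∈ Sg A := by
  refine ⟨A.smul_mem c hz.1, by simp [hz.2.1], fun a ha => by simp [hz.2.2 a ha]⟩

lemma Sg_U {A : Submodule F (Matrix (Fin n) (Fin n) F)} (h2 : (2 : F) ≠ 0) (h : JC A)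
    {z b : Matrix (Fin n) (Fin n) F} (hz : z ∈ Sg A) (hb : b ∈ A) :
    b * z * b ∈ Sg A := by
  refine ⟨h.U h2 hb hz.1, ?_, ?_⟩
  · have : b * z * b * (b * z * b) = b * (z * (b * b) * z) * b := by noncomm_ring
    rw [this, hz.2.2 _ (h.sq h2 hb)]; simp
  · intro a ha
    have : b * z * b * a * (b * z * b) = b * (z * (b * a * b) * z) * b := by noncomm_ring
    rw [this, hz.2.2 _ (h.U h2 hb ha)]; simp

lemma Sg_U1 {A : Submodule F (Matrix (Fin n) (Fin n) F)} (h2 : (2 : F) ≠ 0) (h : JC A)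
    {z b : Matrix (Fin n) (Fin n) F} (hz : z ∈ Sg A) (hb : b ∈ A) :
    (1 + b) * z * (1 + b) ∈ Sg A := by
  refine ⟨h.U1 h2 hb hz.1, ?_, ?_⟩
  · have : (1 + b) * z * (1 + b) * ((1 + b) * z * (1 + b))
      = (1 + b) * (z * z + z * (b + b + b * b) * z) * (1 + b) := by noncomm_ring
    rw [this, hz.2.1, hz.2.2 _ (A.add_mem (A.add_mem hb hb) (h.sq h2 hb))]; simp
  · intro a ha
    have : (1 + b) * z * (1 + b) * a * ((1 + b) * z * (1 + b))
      = (1 + b) * (z * ((1 + b) * a * (1 + b)) * z) * (1 + b) := by noncomm_ring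
    rw [this, hz.2.2 _ (h.U1 h2 hb ha)]; simp

/-- the span of `Sg A` is an ideal -/
lemma Sg_ideal {A : Submodule F (Matrix (Fin n) (Fin n) F)} (h2 : (2 : F) ≠ 0) (h : JC A)
    {b y : Matrix (Fin n) (Fin n) F} (hb : b ∈ A) (hy : y ∈ Submodule.span F (Sg A)) :
    b * y + y * b ∈ Submodule.span F (Sg A) := by
  induction hy using Submodule.span_induction with
  | mem z hz =>
    have h1 := Submodule.subset_span (R := F) (Sg_U1 h2 h hz hb)
    have h3 := Submodule.subset_span (R := F) (Sg_U h2 h hz hb)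
    have h4 := Submodule.subset_span (R := F) hz
    have := Submodule.sub_mem _ (Submodule.sub_mem _ h1 h3) h4
    convert this using 1
    noncomm_ring
  | zero => simp
  | add x y _ _ hx hy =>
    convert Submodule.add_mem _ hx hy using 1
    noncomm_ring
  | smul c x _ hx =>
    convert Submodule.smul_mem _ c hx using 1
    simp

end Basics

section Engel

variable {F : Type*} [Field F] {n : ℕ}

/-- two-sided words -/
def GG (T : Submodule F (Matrix (Fin n) (Fin n) F)) (l : ℕ) :
    Submodule F (Matrix (Fin n) (Fin n) F) :=
  ⨆ (i : ℕ) (j : ℕ) (_ : i + j = l), T ^ i * ⊤ * T ^ j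

lemma GG_left (T : Submodule F (Matrix (Fin n) (Fin n) F)) (l : ℕ) :
    T * GG T l ≤ GG T (l + 1) := by
  unfold GG
  simp only [Submodule.mul_iSup]
  refine iSup_le fun i => iSup_le fun j => iSup_le fun h => ?_
  refine le_iSup_of_le (i + 1) (le_iSup_of_le j (le_iSup_of_le (by omega) ?_))
  rw [pow_succ', ← mul_assoc, ← mul_assoc]

lemma GG_right (T : Submodule F (Matrix (Fin n) (Fin n) F)) (l : ℕ) :
    GG T l * T ≤ GG T (l + 1) := by
  unfold GG
  simp only [Submodule.iSup_mul]
  refine iSup_le fun i => iSup_le fun j => iSup_le fun h => ?_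
  refine le_iSup_of_le i (le_iSup_of_le (j + 1) (le_iSup_of_le (by omega) ?_))
  rw [pow_succ, ← mul_assoc]

lemma pow_bot_of_le {T : Submodule F (Matrix (Fin n) (Fin n) F)} {k i : ℕ}
    (hk : T ^ k = ⊥) (hi : k ≤ i) : T ^ i = ⊥ := by
  obtain ⟨d, rfl⟩ := Nat.exists_eq_add_of_le hi
  rw [pow_add, hk, Submodule.bot_mul]

lemma GG_bot {T : Submodule F (Matrix (Fin n) (Fin n) F)} {k : ℕ} (hk : T ^ k = ⊥) :
    GG T (2 * k) = ⊥ := by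
  unfold GG
  simp only [iSup_eq_bot]
  intro i j h
  rcases le_or_gt k i with hi | hi
  · rw [pow_bot_of_le hk hi, Submodule.bot_mul, Submodule.bot_mul]
  · rw [pow_bot_of_le (i := j) hk (by omega), Submodule.mul_bot]

/-- words of length at least `j` -/
def HH (T : Submodule F (Matrix (Fin n) (Fin n) F)) (j : ℕ) :
    Submodule F (Matrix (Fin n) (Fin n) F) :=
  ⨆ (i : ℕ) (_ : j ≤ i), T ^ i

lemma HH_left (T : Submodule F (Matrix (Fin n) (Fin n) F)) (j : ℕ) :
    T * HH T j ≤ HH T (j + 1) := by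
  unfold HH
  simp only [Submodule.mul_iSup]
  refine iSup_le fun i => iSup_le fun h => ?_
  refine le_iSup_of_le (i + 1) (le_iSup_of_le (by omega) ?_)
  rw [pow_succ']

lemma HH_anti (T : Submodule F (Matrix (Fin n) (Fin n) F)) (j : ℕ) :
    HH T (j + 1) ≤ HH T j := by
  unfold HH
  refine iSup_le fun i => iSup_le fun h => ?_
  exact le_iSup_of_le i (le_iSup_of_le (by omega) le_rfl)

lemma HH_bot {T : Submodule F (Matrix (Fin n) (Fin n) F)} {k : ℕ} (hk : T ^ k = ⊥) :
    HH T k = ⊥ := by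
  unfold HH
  simp only [iSup_eq_bot]
  intro i h
  exact pow_bot_of_le hk h

lemma ext_nilp {T X : Submodule F (Matrix (Fin n) (Fin n) F)} {k : ℕ} (hk : T ^ k = ⊥)
    (hX : X * X = ⊥) (hTX : T * X ≤ X * T ⊔ T) : (T ⊔ X) ^ (2 * k) = ⊥ := by
  set K : ℕ → Submodule F (Matrix (Fin n) (Fin n) F) := fun j => HH T j ⊔ X * HH T j with hK
  have s1 : ∀ j, T * (X * HH T j) ≤ K (j + 1) := by
    intro j
    rw [← mul_assoc]
    refine (mul_le_mul_left hTX _).trans ?_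
    rw [Submodule.sup_mul, mul_assoc]
    refine sup_le ?_ ?_
    · exact (mul_le_mul_right (HH_left T j) _).trans le_sup_right
    · exact (HH_left T j).trans le_sup_left
  have s2 : ∀ j, (T ⊔ X) * (X * HH T j) ≤ K (j + 1) := by
    intro j
    rw [Submodule.sup_mul]
    refine sup_le (s1 j) ?_
    rw [← mul_assoc, hX, Submodule.bot_mul]
    exact bot_le
  have s3 : ∀ j, (T ⊔ X) * K j ≤ K (j + 1) ⊔ X * HH T j := by
    intro j
    simp only [hK]
    rw [Submodule.mul_sup]
    refine sup_le ?_ ((s2 j).trans le_sup_left)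
    rw [Submodule.sup_mul]
    exact sup_le (((HH_left T j).trans le_sup_left).trans le_sup_left) le_sup_right
  have s4 : ∀ j, (T ⊔ X) * K (j + 1) ≤ K (j + 1) := by
    intro j
    refine (s3 (j+1)).trans (sup_le ?_ le_sup_right)
    exact sup_le ((HH_anti T _).trans le_sup_left)
      ((mul_le_mul_right (HH_anti T _) _).trans le_sup_right)
  have s5 : ∀ j, (T ⊔ X) ^ 2 * K j ≤ K (j + 1) := by
    intro j
    rw [pow_two, mul_assoc]
    refine (mul_le_mul_right (s3 j) _).trans ?_
    rw [Submodule.mul_sup]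
    exact sup_le (s4 j) (s2 j)
  have s6 : ∀ j, (T ⊔ X) ^ (2 * j) * K 0 ≤ K j := by
    intro j
    induction j with
    | zero => simp
    | succ j ih =>
      rw [show 2 * (j + 1) = 2 + 2 * j by ring, pow_add, mul_assoc]
      exact (mul_le_mul_right ih _).trans (s5 j)
  have s7 : K k = ⊥ := by
    simp only [hK]
    rw [HH_bot hk]; simp
  have s8 : (1 : Submodule F (Matrix (Fin n) (Fin n) F)) ≤ K 0 := by
    refine le_trans ?_ le_sup_left
    exact le_iSup_of_le 0 (le_iSup_of_le le_rfl (by simp))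
  have := (mul_le_mul_right s8 ((T ⊔ X) ^ (2 * k))).trans (s6 k)
  rw [s7, mul_one] at this
  exact le_bot_iff.mp this

end Engel


section Nondeg

variable {F : Type*} [Field F] {n : ℕ}

lemma engel_aux (N : ℕ) : ∀ T : Submodule F (Matrix (Fin n) (Fin n) F),
    Module.finrank F T = N → JC T → T ≤ Submodule.span F (Sg T) → ∃ k, T ^ k = ⊥ := by
  induction N using Nat.strong_induction_on with
  | _ N IH =>
  intro T hN hT hspan
  by_cases hT0 : T = ⊥
  · exact ⟨1, by simpa using hT0⟩
  -- candidates
  let P : Submodule F (Matrix (Fin n) (Fin n) F) → Prop := fun S =>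
    S < T ∧ JC S ∧ S ≤ Submodule.span F (Sg T ∩ S)
  have hP0 : P ⊥ := by
    refine ⟨bot_lt_iff_ne_bot.mpr hT0, ?_, bot_le⟩
    intro x hx y hy
    rw [Submodule.mem_bot] at *
    simp [hx, hy]
  obtain ⟨S, hS, hmax⟩ : ∃ S, P S ∧ ∀ S', P S' → ¬ S < S' :=
    WellFounded.has_min (r := fun a b : Submodule F (Matrix (Fin n) (Fin n) F) => a > b)
      wellFounded_gt {S | P S} ⟨⊥, hP0⟩
  obtain ⟨hST, hSJ, hSs⟩ := hS
  have hSg : Sg T ∩ S ⊆ Sg S := fun z hz => ⟨hz.2, hz.1.2.1, fun a ha => hz.1.2.2 a (hST.le ha)⟩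
  obtain ⟨k, hk⟩ := IH _ (hN ▸ Submodule.finrank_lt_finrank_of_lt hST) S rfl hSJ
    (hSs.trans (Submodule.span_mono hSg))
  -- find x
  have hx : ∃ x ∈ Sg T, x ∉ S ∧ ∀ t ∈ S, t * x + x * t ∈ S := by
    by_contra hcon
    push Not at hcon
    have step : ∀ l, ∃ x ∈ Sg T, x ∉ S ∧ x ∈ GG S l := by
      intro l
      induction l with
      | zero =>
        have : ¬ Sg T ⊆ S := by
          intro h
          exact absurd (hspan.trans (Submodule.span_le.mpr h)) (not_le_of_gt hST)
        obtain ⟨x, hx, hxS⟩ := Set.not_subset.mp this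
        refine ⟨x, hx, hxS, ?_⟩
        have : (⊤ : Submodule F (Matrix (Fin n) (Fin n) F)) ≤ GG S 0 :=
          le_iSup_of_le 0 (le_iSup_of_le 0 (le_iSup_of_le rfl (by simp)))
        exact this trivial
      | succ l ih =>
        obtain ⟨x, hx, hxS, hxG⟩ := ih
        obtain ⟨t, ht, htx⟩ := hcon x hx hxS
        have : ∃ z ∈ Sg T ∩ S, z * x + x * z ∉ S := by
          by_contra hc
          push Not at hc
          apply htx
          have ht' := hSs ht
          clear htx ht
          induction ht' using Submodule.span_induction with
          | mem z hz => exact hc z hz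
          | zero => simp
          | add a b _ _ ha hb =>
            convert S.add_mem ha hb using 1
            noncomm_ring
          | smul c a _ ha =>
            convert S.smul_mem c ha using 1
            simp
        obtain ⟨z, hz, hzx⟩ := this
        refine ⟨_, Sg_mul hT hz.1 hx, hzx, ?_⟩
        exact Submodule.add_mem _ (GG_left S l (Submodule.mul_mem_mul hz.2 hxG))
          (GG_right S l (Submodule.mul_mem_mul hxG hz.2))
    obtain ⟨x, -, hxS, hxG⟩ := step (2 * k)
    rw [GG_bot hk, Submodule.mem_bot] at hxG
    exact hxS (hxG ▸ S.zero_mem)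
  obtain ⟨x, hxT, hxS, hxc⟩ := hx
  have hXX : Submodule.span F {x} * Submodule.span F {x} = ⊥ := by
    rw [Submodule.span_mul_span]
    simp [hxT.2.1]
  have hSX : S * Submodule.span F {x} ≤ Submodule.span F {x} * S ⊔ S := by
    rw [Submodule.mul_le]
    intro t ht y hy
    obtain ⟨c, rfl⟩ := Submodule.mem_span_singleton.mp hy
    have e : t * c • x = (c • x) * (-t) + c • (t * x + x * t) := by
      simp
    rw [e]
    exact Submodule.add_mem _
      (Submodule.mem_sup_left (Submodule.mul_mem_mul hy (S.neg_mem ht)))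
      (Submodule.mem_sup_right (S.smul_mem c (hxc t ht)))
  have hTe : T = S ⊔ Submodule.span F {x} := by
    by_contra hne
    have hle : S ⊔ Submodule.span F {x} ≤ T :=
      sup_le hST.le ((Submodule.span_singleton_le_iff_mem _ _).mpr hxT.1)
    refine hmax (S ⊔ Submodule.span F {x}) ⟨lt_of_le_of_ne hle (Ne.symm hne), ?_, ?_⟩ ?_
    · intro a ha b hb
      obtain ⟨s, hs, y, hy, rfl⟩ := Submodule.mem_sup.mp ha
      obtain ⟨s', hs', y', hy', rfl⟩ := Submodule.mem_sup.mp hb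
      obtain ⟨c, rfl⟩ := Submodule.mem_span_singleton.mp hy
      obtain ⟨c', rfl⟩ := Submodule.mem_span_singleton.mp hy'
      have e : (s + c • x) * (s' + c' • x) + (s' + c' • x) * (s + c • x)
        = (s * s' + s' * s) + c' • (s * x + x * s) + c • (s' * x + x * s') := by
        simp only [add_mul, mul_add, smul_mul_assoc, mul_smul_comm, hxT.2.1, smul_zero, smul_add]
        abel
      rw [e]
      exact Submodule.mem_sup_left (S.add_mem (S.add_mem (hSJ s hs s' hs')
        (S.smul_mem _ (hxc s hs))) (S.smul_mem _ (hxc s' hs')))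
    · refine sup_le (hSs.trans (Submodule.span_mono ?_)) (Submodule.span_mono ?_)
      · exact fun z hz => ⟨hz.1, Submodule.mem_sup_left hz.2⟩
      · intro z hz
        rw [Set.mem_singleton_iff] at hz
        subst hz
        exact ⟨hxT, Submodule.mem_sup_right (Submodule.mem_span_singleton_self z)⟩
    · refine lt_of_le_of_ne le_sup_left ?_
      intro h
      apply hxS
      rw [h]
      exact Submodule.mem_sup_right (Submodule.mem_span_singleton_self x)
  exact ⟨2 * k, by rw [hTe]; exact ext_nilp hk hXX hSX⟩

/-- nondegenerate -/
def ND (A : Submodule F (Matrix (Fin n) (Fin n) F)) : Prop :=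
  ∀ z ∈ A, (∀ a ∈ A, z * a * z = 0) → z = 0

lemma JC_of (h2 : (2 : F) ≠ 0) {A : Submodule F (Matrix (Fin n) (Fin n) F)}
    (h : ∀ x ∈ A, ∀ y ∈ A, jp x y ∈ A) : JC A := by
  intro x hx y hy
  have := A.smul_mem 2 (h x hx y hy)
  rwa [jp, smul_smul, mul_inv_cancel₀ h2, one_smul] at this

lemma simple_ideal {A : Submodule F (Matrix (Fin n) (Fin n) F)}
    (hs : IsSimpleJordan F A) (I : Submodule F (Matrix (Fin n) (Fin n) F)) (hI : I ≤ A)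
    (hid : ∀ x ∈ A, ∀ y ∈ I, x * y + y * x ∈ I) (hne : ∃ x ∈ I, x ≠ 0) : I = A := by
  rcases hs.2 I hI (fun x hx y hy => I.smul_mem _ (hid x hx y hy)) with h | h
  · obtain ⟨x, hx, hx0⟩ := hne
    rw [h, Submodule.mem_bot] at hx
    exact absurd hx hx0
  · exact h

lemma ND_of_simple (h2 : (2 : F) ≠ 0) {A : Submodule F (Matrix (Fin n) (Fin n) F)}
    (hJ : JC A) (hs : IsSimpleJordan F A) : ND A := by
  intro z0 hz0 hz0a
  by_contra hne
  have hz : ∃ z ∈ Sg A, z ≠ 0 := by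
    by_cases h : z0 * z0 = 0
    · exact ⟨z0, ⟨hz0, h, hz0a⟩, hne⟩
    · refine ⟨z0 * z0, ⟨hJ.sq h2 hz0, ?_, ?_⟩, h⟩
      · have : z0 * z0 * (z0 * z0) = (z0 * z0 * z0) * z0 := by noncomm_ring
        rw [this, hz0a z0 hz0, zero_mul]
      · intro a ha
        have : z0 * z0 * a * (z0 * z0) = z0 * (z0 * a * z0) * z0 := by noncomm_ring
        rw [this, hz0a a ha]; simp
  obtain ⟨z, hz, hznz⟩ := hz
  have hle : Submodule.span F (Sg A) ≤ A := Submodule.span_le.mpr fun z hz => hz.1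
  have h1 := simple_ideal hs _ hle (fun x hx y hy => Sg_ideal h2 hJ hx hy)
    ⟨z, Submodule.subset_span hz, hznz⟩
  obtain ⟨k, hk⟩ := engel_aux _ A rfl hJ h1.ge
  let I := Submodule.span F {w | ∃ x ∈ A, ∃ y ∈ A, w = x * y + y * x}
  have hIA : I ≤ A := by
    refine Submodule.span_le.mpr ?_
    rintro w ⟨x, hx, y, hy, rfl⟩
    exact hJ x hx y hy
  have hI : I = A := by
    refine simple_ideal hs I hIA ?_ ?_
    · intro x hx y hy
      exact Submodule.subset_span ⟨x, hx, y, hIA hy, rfl⟩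
    · obtain ⟨x, hx, y, hy, h⟩ := hs.1
      refine ⟨x * y + y * x, Submodule.subset_span ⟨x, hx, y, hy, rfl⟩, ?_⟩
      intro h0
      apply h
      rw [jp, h0, smul_zero]
  have hA2 : A ≤ A * A := by
    conv_lhs => rw [← hI]
    refine Submodule.span_le.mpr ?_
    rintro w ⟨x, hx, y, hy, rfl⟩
    exact Submodule.add_mem _ (Submodule.mul_mem_mul hx hy) (Submodule.mul_mem_mul hy hx)
  have hpow : ∀ k, A ≤ A ^ (k + 1) := by
    intro k
    induction k with
    | zero => simp
    | succ k ih =>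
      rw [pow_succ]
      exact hA2.trans (mul_le_mul_left ih _)
  have := hpow k
  rw [pow_succ, hk, Submodule.bot_mul] at this
  exact hne (by simpa using this hz0)

end Nondeg

section Prim

variable {F : Type*} [Field F] [IsAlgClosed F] {n : ℕ}

/-- primitive idempotents exist -/
lemma exists_prim (h2 : (2 : F) ≠ 0) {A : Submodule F (Matrix (Fin n) (Fin n) F)}
    (hJ : JC A) (hN : ND A) (hA : A ≠ ⊥) :
    ∃ e ∈ A, e ≠ 0 ∧ e * e = e ∧ ∀ a ∈ A, ∃ c : F, e * a * e = c • e := by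
  obtain ⟨a0, ha0, ha00⟩ := Submodule.exists_mem_ne_zero_of_ne_bot hA
  obtain ⟨W, ⟨a, ha, hane, rfl⟩, hmax⟩ :=
    WellFounded.has_min (r := fun a b : Submodule F (Fin n → F) => a > b)
      wellFounded_gt {W | ∃ a ∈ A, a ≠ 0 ∧ W = LinearMap.ker a.mulVecLin} ⟨_, a0, ha0, ha00, rfl⟩
  -- key
  have key : ∀ b, a * b * a ∈ A → ∃ c : F, a * b * a = c • a := by
    intro b hb
    let R := LinearMap.range a.mulVecLin
    have hR : ∀ w ∈ R, (a * b).mulVecLin w ∈ R := by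
      rintro w -
      refine ⟨b.mulVec w, ?_⟩
      simp
    have : Nontrivial R := by
      rw [Submodule.nontrivial_iff_ne_bot]
      intro h
      apply hane
      rw [LinearMap.range_eq_bot] at h
      ext i j
      have := congrFun (LinearMap.congr_fun h (Pi.single j 1)) i
      simpa using this
    obtain ⟨c, hc⟩ := Module.End.exists_eigenvalue ((a * b).mulVecLin.restrict hR)
    obtain ⟨w, hw⟩ := hc.exists_hasEigenvector
    obtain ⟨⟨w', u, rfl⟩, hw2⟩ : ∃ w' : R, w = w' := ⟨w, rfl⟩
    have hw1 := hw.apply_eq_smul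
    have hw3 := hw.2
    subst hw2
    have hw1' := congrArg Subtype.val hw1
    simp only [LinearMap.restrict_apply, Matrix.mulVecLin_apply, Submodule.coe_smul, Matrix.mulVec_mulVec] at hw1'
    have hau : a.mulVec u ≠ 0 := by
      intro h
      apply hw3
      ext1
      simpa using h
    refine ⟨c, ?_⟩
    by_contra hne
    refine hmax _ ⟨a * b * a - c • a, A.sub_mem hb (A.smul_mem c ha), sub_ne_zero.mpr hne, rfl⟩ ?_
    refine lt_of_le_of_ne ?_ ?_
    · intro v hv
      rw [LinearMap.mem_ker, Matrix.mulVecLin_apply] at *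
      rw [Matrix.sub_mulVec, Matrix.smul_mulVec, ← Matrix.mulVec_mulVec, hv]
      simp
    · intro h
      apply hau
      have : u ∈ LinearMap.ker (a * b * a - c • a).mulVecLin := by
        rw [LinearMap.mem_ker, Matrix.mulVecLin_apply, Matrix.sub_mulVec, Matrix.smul_mulVec, hw1',
          sub_self]
      rw [← h, LinearMap.mem_ker, Matrix.mulVecLin_apply] at this
      exact this
  obtain ⟨l, hl⟩ := key 1 (by rw [mul_one]; exact hJ.sq h2 ha)
  rw [mul_one] at hl
  by_cases hl0 : l = 0
  · rw [hl0, zero_smul] at hl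
    have : ∃ b ∈ A, a * b * a ≠ 0 := by
      by_contra hc
      push Not at hc
      exact hane (hN a ha hc)
    obtain ⟨b0, hb0, hb0a⟩ := this
    obtain ⟨c, hc⟩ := key b0 (hJ.U h2 ha hb0)
    have hc0 : c ≠ 0 := by
      rintro rfl
      rw [zero_smul] at hc
      exact hb0a hc
    obtain ⟨b, hb, hba⟩ : ∃ b ∈ A, a * b * a = a := by
      refine ⟨c⁻¹ • b0, A.smul_mem _ hb0, ?_⟩
      rw [mul_smul_comm, smul_mul_assoc, hc, smul_smul, inv_mul_cancel₀ hc0, one_smul]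
    obtain ⟨μ, hμ⟩ := key (b * b) (hJ.U h2 ha (hJ.sq h2 hb))
    -- general t
    have main : ∃ b ∈ A, ∃ ν : F, ν ≠ 0 ∧ a * b * a + a * b * a + a * (b * b) * a = ν • a ∧
        a * (b * a * b) * a ≠ 0 := by
      by_cases h : 2 + μ = 0
      · refine ⟨-b, A.neg_mem hb, -2 + μ, ?_, ?_, ?_⟩
        · intro h'
          have : (2 : F) * 2 = 0 := by linear_combination h - h'
          simp [h2] at this
        · have : a * -b * a + a * -b * a + a * (-b * -b) * a
            = -(a * b * a) - a * b * a + a * (b * b) * a := by noncomm_ring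
          rw [this, hba, hμ]
          module
        · have : a * (-b * a * -b) * a = (a * b * a) * b * a := by noncomm_ring
          rw [this, hba, hba]; exact hane
      · refine ⟨b, hb, 2 + μ, h, ?_, ?_⟩
        · rw [hba, hμ]; module
        · have : a * (b * a * b) * a = (a * b * a) * b * a := by noncomm_ring
          rw [this, hba, hba]; exact hane
    clear hμ hba hb b
    obtain ⟨b, hb, ν, hν, hb1, hb2⟩ := main
    set g := (1 + b) * a * (1 + b) with hg
    have hgA : g ∈ A := hJ.U1 h2 hb ha
    have hgg : g * g = ν • g := by
      have : g * g = (1 + b) * (a * a + (a * b * a + a * b * a + a * (b * b) * a)) * (1 + b) := by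
        rw [hg]; noncomm_ring
      rw [this, hl, zero_add, hb1, hg]; simp
    have hg0 : g ≠ 0 := by
      intro h
      apply hb2
      have : a * (b * a * b) * a = a * g * a - a * a * a - (a * a) * b * a - a * b * (a * a) := by
        rw [hg]; noncomm_ring
      rw [this, h, hl]; simp
    refine ⟨ν⁻¹ • g, A.smul_mem _ hgA, ?_, ?_, ?_⟩
    · simp [hν, hg0]
    · rw [smul_mul_smul_comm, hgg, smul_smul, mul_assoc, inv_mul_cancel₀ hν, mul_one]
    · intro x hx
      obtain ⟨c, hc⟩ := key _ (hJ.U h2 ha (hJ.U1 h2 hb hx))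
      refine ⟨ν⁻¹ * c, ?_⟩
      have : g * x * g = c • g := by
        have : g * x * g = (1 + b) * (a * ((1 + b) * x * (1 + b)) * a) * (1 + b) := by
          rw [hg]; noncomm_ring
        rw [this, hc, hg]; simp
      simp only [smul_mul_assoc, mul_smul_comm, this, smul_smul]
      congr 1
      ring
  · refine ⟨l⁻¹ • a, A.smul_mem _ ha, by simp [hl0, hane], ?_, ?_⟩
    · rw [smul_mul_smul_comm, hl, smul_smul, mul_assoc, inv_mul_cancel₀ hl0, mul_one]
    · intro x hx
      obtain ⟨c, hc⟩ := key x (hJ.U h2 ha hx)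
      refine ⟨l⁻¹ * c, ?_⟩
      simp only [smul_mul_assoc, mul_smul_comm, hc, smul_smul]
      congr 1
      ring

end Prim


section Frames

variable {F : Type*} [Field F] {n : ℕ}

lemma exists_family [IsAlgClosed F] (h2 : (2 : F) ≠ 0) (N : ℕ) :
    ∀ A : Submodule F (Matrix (Fin n) (Fin n) F),
    Module.finrank F A = N → JC A → ND A →
    ∃ (m : ℕ) (e : Fin m → Matrix (Fin n) (Fin n) F), (∀ i, e i ∈ A) ∧ (∀ i, e i ≠ 0) ∧
      (∀ i, e i * e i = e i) ∧ (∀ i j, i ≠ j → e i * e j = 0) ∧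
      (∀ i, ∀ a ∈ A, ∃ c : F, e i * a * e i = c • e i) ∧
      (∀ a ∈ A, (∀ i, e i * a = 0 ∧ a * e i = 0) → a = 0) := by
  induction N using Nat.strong_induction_on with
  | _ N IH =>
  intro A hN hJ hND
  by_cases hA : A = ⊥
  · refine ⟨0, Fin.elim0, ?_⟩
    simp [hA]
  obtain ⟨e0, he0, he0n, he00, hprim⟩ := exists_prim h2 hJ hND hA
  let A0 : Submodule F (Matrix (Fin n) (Fin n) F) :=
    { carrier := {a | a ∈ A ∧ e0 * a = 0 ∧ a * e0 = 0}
      zero_mem' := by simp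
      add_mem' := by
        rintro a b ⟨h1, h3, h4⟩ ⟨h5, h6, h7⟩
        exact ⟨A.add_mem h1 h5, by rw [mul_add, h3, h6, add_zero], by rw [add_mul, h4, h7, add_zero]⟩
      smul_mem' := by
        rintro c a ⟨h1, h3, h4⟩
        exact ⟨A.smul_mem c h1, by rw [mul_smul_comm, h3, smul_zero],
          by rw [smul_mul_assoc, h4, smul_zero]⟩ }
  have hle : A0 ≤ A := fun a ha => ha.1
  have hlt : A0 < A := by
    refine lt_of_le_of_ne hle ?_
    intro h
    have : e0 ∈ A0 := h ▸ he0
    exact he0n (by rw [← he00]; exact this.2.1)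
  have hproj : ∀ a ∈ A, a - (e0 * a + a * e0) + e0 * a * e0 ∈ A0 := by
    intro a ha
    refine ⟨A.add_mem (A.sub_mem ha (hJ e0 he0 a ha)) (hJ.U h2 he0 ha), ?_, ?_⟩
    · have : e0 * (a - (e0 * a + a * e0) + e0 * a * e0)
        = e0 * a - (e0 * e0) * a - e0 * a * e0 + (e0 * e0) * a * e0 := by noncomm_ring
      rw [this, he00]; abel
    · have : (a - (e0 * a + a * e0) + e0 * a * e0) * e0
        = a * e0 - a * (e0 * e0) - e0 * a * e0 + e0 * a * (e0 * e0) := by noncomm_ring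
      rw [this, he00]; abel
  have hsand : ∀ z ∈ A0, ∀ a, z * a * z = z * (a - (e0 * a + a * e0) + e0 * a * e0) * z := by
    rintro z ⟨-, h3, h4⟩ a
    have : z * (a - (e0 * a + a * e0) + e0 * a * e0) * z
      = z * a * z - (z * e0) * a * z - z * a * (e0 * z) + (z * e0) * a * (e0 * z) := by noncomm_ring
    rw [this, h3, h4]; simp
  have hJ0 : JC A0 := by
    rintro x ⟨h1, h3, h4⟩ y ⟨h5, h6, h7⟩
    refine ⟨hJ x h1 y h5, ?_, ?_⟩
    · rw [mul_add, ← mul_assoc, ← mul_assoc, h3, h6]; simp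
    · rw [add_mul, mul_assoc, mul_assoc, h4, h7]; simp
  have hND0 : ND A0 := by
    intro z hz hza
    refine hND z hz.1 fun a ha => ?_
    rw [hsand z hz]
    exact hza _ (hproj a ha)
  obtain ⟨m, e, h1, h3, h4, h5, h6, h7⟩ :=
    IH _ (hN ▸ Submodule.finrank_lt_finrank_of_lt hlt) A0 rfl hJ0 hND0
  refine ⟨m + 1, Fin.cons e0 e, ?_, ?_, ?_, ?_, ?_, ?_⟩
  · intro i
    refine Fin.cases ?_ (fun i => ?_) i
    · simpa using he0
    · simpa using (h1 i).1
  · intro i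
    refine Fin.cases ?_ (fun i => ?_) i
    · simpa using he0n
    · simpa using h3 i
  · intro i
    refine Fin.cases ?_ (fun i => ?_) i
    · simpa using he00
    · simpa using h4 i
  · intro i j
    refine Fin.cases ?_ (fun i => ?_) i
    · refine Fin.cases ?_ (fun j => ?_) j
      · simp
      · intro _
        simpa using (h1 j).2.1
    · refine Fin.cases ?_ (fun j => ?_) j
      · intro _
        simpa using (h1 i).2.2
      · intro hij
        simpa using h5 i j (by rintro rfl; exact hij rfl)
  · intro i
    refine Fin.cases ?_ (fun i => ?_) i
    · simpa using hprim
    · intro a ha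
      obtain ⟨c, hc⟩ := h6 i _ (hproj a ha)
      refine ⟨c, ?_⟩
      simp only [Fin.cons_succ]
      rw [hsand _ (h1 i), hc]
  · intro a ha h
    have h0 := h 0
    simp only [Fin.cons_zero] at h0
    refine h7 a ⟨ha, h0⟩ fun i => ?_
    simpa using h i.succ

lemma unit_of_peirce (h2 : (2 : F) ≠ 0) {A : Submodule F (Matrix (Fin n) (Fin n) F)}
    (hJ : JC A) (hN : ND A) {f : Matrix (Fin n) (Fin n) F} (hf : f ∈ A) (hff : f * f = f)
    (h0 : ∀ a ∈ A, f * a = 0 → a * f = 0 → a = 0) {a : Matrix (Fin n) (Fin n) F} (ha : a ∈ A) :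
    f * a = a ∧ a * f = a := by
  obtain ⟨g, hg⟩ : ∃ g, g = 1 - f := ⟨_, rfl⟩
  have hfg : f * g = 0 := by rw [hg, mul_sub, hff]; simp
  have hgf : g * f = 0 := by rw [hg, sub_mul, hff]; simp
  have hgg : g * g = g := by rw [hg, mul_sub, ← hg, hgf]; simp
  have hsum : f + g = 1 := by rw [hg]; abel
  have Z : ∀ c ∈ A, g * c * g = 0 := by
    intro c hc
    apply h0
    · have := A.add_mem (A.sub_mem hc (hJ f hf c hc)) (hJ.U h2 hf hc)
      convert this using 1
      rw [hg]; noncomm_ring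
    · rw [← mul_assoc, ← mul_assoc, hfg]; simp
    · rw [mul_assoc, hgf]; simp
  have Z2 : ∀ a ∈ A, ∀ b ∈ A, g * a * f * b * g = -(g * b * f * a * g) := by
    intro a ha b hb
    have := Z _ (hJ.T h2 ha hf hb)
    rw [eq_neg_iff_add_eq_zero, ← this]; noncomm_ring
  have hc : f * a * g * a * f = 0 := by
    apply hN
    · have := A.sub_mem (hJ.U h2 hf (hJ.sq h2 ha)) (hJ.U h2 hf (hJ.U h2 ha hf))
      convert this using 1
      rw [hg]; noncomm_ring
    · intro b hb
      have := Z _ (hJ.U h2 ha (hJ.U h2 hf hb))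
      have e : f * a * g * a * f * b * (f * a * g * a * f)
        = f * a * (g * (a * (f * b * f) * a) * g) * a * f := by noncomm_ring
      rw [e, this]; simp
  have hx : g * a * f + f * a * g = 0 := by
    apply hN
    · have := A.sub_mem (A.sub_mem (hJ f hf a ha) (hJ.U h2 hf ha)) (hJ.U h2 hf ha)
      convert this using 1
      rw [hg]; noncomm_ring
    · intro b hb
      have e : (g * a * f + f * a * g) * b * (g * a * f + f * a * g)
        = (g * a * f * b * g) * a * f + g * (a * (f * b * f) * a) * g + f * a * (g * b * g) * a * f
          + f * a * (g * b * f * a * g) := by noncomm_ring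
      have t1 : g * a * f * b * g * a * f = 0 := by
        rw [Z2 a ha b hb]
        have : -(g * b * f * a * g) * a * f = -(g * b * (f * a * g * a * f)) := by noncomm_ring
        rw [this, hc]; simp
      have t2 : f * a * (g * b * f * a * g) = 0 := by
        rw [Z2 b hb a ha]
        have : f * a * -(g * a * f * b * g) = -((f * a * g * a * f) * b * g) := by noncomm_ring
        rw [this, hc]; simp
      rw [e, Z _ (hJ.U h2 ha (hJ.U h2 hf hb)), Z b hb, t1, t2]; simp
  have hgaf : g * a * f = 0 := by
    have := congrArg (fun z => g * z) hx
    simp only [mul_add, ← mul_assoc, hgg, hgf] at this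
    simpa using this
  have hfag : f * a * g = 0 := by rw [hgaf, zero_add] at hx; exact hx
  have hgag := Z a ha
  constructor
  · have : a = f * a + g * a * f + g * a * g := by
      have e : f * a + g * a * f + g * a * g = (f * a + g * a * (f + g)) := by noncomm_ring
      rw [e, hsum, mul_one, ← add_mul, hsum, one_mul]
    rw [hgaf, hgag] at this
    simpa using this.symm
  · have : a = a * f + f * a * g + g * a * g := by
      have e : a * f + f * a * g + g * a * g = (a * f + (f + g) * a * g) := by noncomm_ring
      rw [e, hsum, one_mul, ← mul_add, hsum, mul_one]
    rw [hfag, hgag] at this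
    simpa using this.symm

/-- A frame of primitive idempotents in `A`. -/
structure Fr (A : Submodule F (Matrix (Fin n) (Fin n) F)) (m : ℕ)
    (e : Fin m → Matrix (Fin n) (Fin n) F) : Prop where
  two : (2 : F) ≠ 0
  jc : JC A
  nd : ND A
  sym : ∀ a ∈ A, aᵀ = a
  mem : ∀ i, e i ∈ A
  ne : ∀ i, e i ≠ 0
  idem : ∀ i, e i * e i = e i
  orth : ∀ i j, i ≠ j → e i * e j = 0
  prim : ∀ i, ∀ a ∈ A, ∃ c : F, e i * a * e i = c • e i
  unit : ∀ a ∈ A, (∑ i, e i) * a = a ∧ a * (∑ i, e i) = a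

lemma exists_Fr [IsAlgClosed F] (h2 : (2 : F) ≠ 0) {A : Submodule F (Matrix (Fin n) (Fin n) F)}
    (hJ : JC A) (hN : ND A) (hs : ∀ a ∈ A, aᵀ = a) : ∃ m e, Fr A m e := by
  obtain ⟨m, e, h1, h3, h4, h5, h6, h7⟩ := exists_family h2 _ A rfl hJ hN
  refine ⟨m, e, h2, hJ, hN, hs, h1, h3, h4, h5, h6, ?_⟩
  have hl : ∀ i, e i * ∑ j, e j = e i := by
    intro i
    rw [Finset.mul_sum, Finset.sum_eq_single i, h4]
    · intro j _ hj
      exact h5 i j hj.symm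
    · simp
  have hr : ∀ i, (∑ j, e j) * e i = e i := by
    intro i
    rw [Finset.sum_mul, Finset.sum_eq_single i, h4]
    · intro j _ hj
      exact h5 j i hj
    · simp
  intro a ha
  refine unit_of_peirce h2 hJ hN (A.sum_mem fun i _ => h1 i) ?_ ?_ ha
  · rw [Finset.sum_mul]
    exact Finset.sum_congr rfl fun i _ => hl i
  · intro a ha h8 h9
    refine h7 a ha fun i => ⟨?_, ?_⟩
    · rw [← hl i, mul_assoc, h8, mul_zero]
    · rw [← hr i, ← mul_assoc, h9, zero_mul]

/-- Peirce component -/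
def Y (A : Submodule F (Matrix (Fin n) (Fin n) F)) {m : ℕ}
    (e : Fin m → Matrix (Fin n) (Fin n) F) (i j : Fin m) :
    Submodule F (Matrix (Fin n) (Fin n) F) :=
  A.map ((LinearMap.mulLeft F (e i)).comp (LinearMap.mulRight F (e j)))

lemma mem_Y {A : Submodule F (Matrix (Fin n) (Fin n) F)} {m : ℕ}
    {e : Fin m → Matrix (Fin n) (Fin n) F} {i j : Fin m} {y : Matrix (Fin n) (Fin n) F} :
    y ∈ Y A e i j ↔ ∃ a ∈ A, y = e i * a * e j := by
  unfold Y
  simp only [Submodule.mem_map, LinearMap.comp_apply, LinearMap.mulLeft_apply,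
    LinearMap.mulRight_apply, ← mul_assoc]
  exact ⟨fun ⟨a, h, h'⟩ => ⟨a, h, h'.symm⟩, fun ⟨a, h, h'⟩ => ⟨a, h, h'.symm⟩⟩

namespace Fr

variable {A : Submodule F (Matrix (Fin n) (Fin n) F)} {m : ℕ}
  {e : Fin m → Matrix (Fin n) (Fin n) F}

lemma esym (h : Fr A m e) (i : Fin m) : (e i)ᵀ = e i := h.sym _ (h.mem i)

lemma Yl (h : Fr A m e) {i j : Fin m} {y : Matrix (Fin n) (Fin n) F} (hy : y ∈ Y A e i j) :
    e i * y = y := by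
  obtain ⟨a, _, rfl⟩ := mem_Y.mp hy
  rw [← mul_assoc, ← mul_assoc, h.idem]

lemma Yr (h : Fr A m e) {i j : Fin m} {y : Matrix (Fin n) (Fin n) F} (hy : y ∈ Y A e i j) :
    y * e j = y := by
  obtain ⟨a, _, rfl⟩ := mem_Y.mp hy
  rw [mul_assoc, h.idem]

lemma Yt (h : Fr A m e) {i j : Fin m} {y : Matrix (Fin n) (Fin n) F} (hy : y ∈ Y A e i j) :
    yᵀ ∈ Y A e j i := by
  obtain ⟨a, ha, rfl⟩ := mem_Y.mp hy
  exact mem_Y.mpr ⟨a, ha, by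
    rw [transpose_mul, transpose_mul, h.esym, h.esym, h.sym a ha, mul_assoc]⟩

lemma Ysum (h : Fr A m e) {i j : Fin m} {y : Matrix (Fin n) (Fin n) F} (hy : y ∈ Y A e i j) :
    y + yᵀ ∈ A := by
  obtain ⟨a, ha, rfl⟩ := mem_Y.mp hy
  rw [transpose_mul, transpose_mul, h.esym, h.esym, h.sym a ha, ← mul_assoc]
  exact h.jc.T h.two (h.mem i) ha (h.mem j)

/-- polarized norm form -/
lemma Yq (h : Fr A m e) {i j : Fin m} {y v : Matrix (Fin n) (Fin n) F} (hy : y ∈ Y A e i j)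
    (hv : v ∈ Y A e i j) : ∃ c : F, y * vᵀ + v * yᵀ = c • e i := by
  obtain ⟨a, ha, rfl⟩ := mem_Y.mp hy
  obtain ⟨b, hb, rfl⟩ := mem_Y.mp hv
  obtain ⟨c, hc⟩ := h.prim i _ (h.jc.T h.two ha (h.mem j) hb)
  refine ⟨c, ?_⟩
  rw [← hc]
  simp only [transpose_mul, h.esym, h.sym a ha, h.sym b hb]
  have : e i * a * e j * (e j * (b * e i)) + e i * b * e j * (e j * (a * e i))
    = e i * a * (e j * e j) * b * e i + e i * b * (e j * e j) * a * e i := by noncomm_ring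
  rw [this, h.idem]; noncomm_ring

lemma Yn (h : Fr A m e) {i j : Fin m} {y : Matrix (Fin n) (Fin n) F} (hy : y ∈ Y A e i j) :
    ∃ c : F, y * yᵀ = c • e i := by
  obtain ⟨c, hc⟩ := h.Yq hy hy
  refine ⟨2⁻¹ * c, ?_⟩
  rw [← smul_smul, ← hc, ← two_smul F, smul_smul, inv_mul_cancel₀ h.two, one_smul]

/-- nondegeneracy -/
lemma Ynd (h : Fr A m e) {i j : Fin m} (hij : i ≠ j) {y : Matrix (Fin n) (Fin n) F}
    (hy : y ∈ Y A e i j) (hq : ∀ v ∈ Y A e i j, y * vᵀ + v * yᵀ = 0) : y = 0 := by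
  by_contra hne
  have hyy : y * yᵀ = 0 := by
    have := hq y hy
    rw [← two_smul F] at this
    exact (smul_eq_zero.mp this).resolve_left h.two
  have hyy' : yᵀ * y = 0 := by
    obtain ⟨c, hc⟩ := h.Yn (h.Yt hy)
    rw [transpose_transpose] at hc
    have : c • y = 0 := by
      have h1 : y * (yᵀ * y) = 0 := by rw [← mul_assoc, hyy, zero_mul]
      rw [hc, mul_smul_comm, h.Yr hy] at h1
      exact h1
    rw [hc, (smul_eq_zero.mp this).resolve_right hne, zero_smul]
  have hb1 : ∀ b ∈ A, y * b * y = 0 := by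
    intro b hb
    have hv : e i * b * e j ∈ Y A e i j := mem_Y.mpr ⟨b, hb, rfl⟩
    have := hq _ hv
    simp only [transpose_mul, h.esym, h.sym b hb] at this
    have e1 : y * b * y = (y * e j) * b * (e i * y) := by rw [h.Yl hy, h.Yr hy]
    have e2 : (y * e j) * b * (e i * y) = (y * (e j * (b * e i))) * y := by noncomm_ring
    rw [e1, e2, eq_neg_of_add_eq_zero_left this]
    rw [neg_mul, mul_assoc, hyy']; simp
  have hx : y + yᵀ = 0 := by
    apply h.nd _ (h.Ysum hy)
    intro b hb
    have hb2 : yᵀ * b * yᵀ = 0 := by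
      have := congrArg transpose (hb1 b hb)
      simpa [transpose_mul, h.sym b hb, mul_assoc] using this
    have hb3 : y * b * yᵀ = 0 := by
      obtain ⟨c, hc⟩ := h.prim j b hb
      have e1 : y * b * yᵀ = (y * e j) * b * (e j * yᵀ) := by rw [h.Yl (h.Yt hy), h.Yr hy]
      have e2 : (y * e j) * b * (e j * yᵀ) = y * (e j * b * e j) * yᵀ := by noncomm_ring
      rw [e1, e2, hc, mul_smul_comm, h.Yr hy, smul_mul_assoc, hyy, smul_zero]
    have hb4 : yᵀ * b * y = 0 := by
      obtain ⟨c, hc⟩ := h.prim i b hb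
      have e1 : yᵀ * b * y = (yᵀ * e i) * b * (e i * y) := by rw [h.Yl hy, h.Yr (h.Yt hy)]
      have e2 : (yᵀ * e i) * b * (e i * y) = yᵀ * (e i * b * e i) * y := by noncomm_ring
      rw [e1, e2, hc, mul_smul_comm, h.Yr (h.Yt hy), smul_mul_assoc, hyy', smul_zero]
    rw [add_mul, add_mul, mul_add, mul_add, hb1 b hb, hb2, hb3, hb4]; simp
  apply hne
  have := congrArg (fun z => e i * z) hx
  simp only [mul_add, h.Yl hy, mul_zero] at this
  rw [← h.Yl (h.Yt hy), ← mul_assoc, h.orth i j hij] at this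
  simpa using this

lemma Ymul (h : Fr A m e) {i j k : Fin m} (hij : i ≠ j) (hik : i ≠ k)
    {y v : Matrix (Fin n) (Fin n) F} (hy : y ∈ Y A e i j) (hv : v ∈ Y A e j k) :
    y * v ∈ Y A e i k := by
  by_cases hjk : j = k
  · subst hjk
    obtain ⟨b, hb, rfl⟩ := mem_Y.mp hv
    obtain ⟨c, hc⟩ := h.prim j b hb
    rw [hc, mul_smul_comm, h.Yr hy]
    exact Submodule.smul_mem _ _ hy
  refine mem_Y.mpr ⟨_, h.jc _ (h.Ysum hy) _ (h.Ysum hv), ?_⟩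
  have a1 := h.Yl hy
  have a2 := h.Yr hy
  have a3 := h.Yl hv
  have a4 := h.Yr hv
  have a5 := h.Yl (h.Yt hy)
  have a6 := h.Yl (h.Yt hv)
  have z1 : e i * v = 0 := by rw [← a3, ← mul_assoc, h.orth i j hij, zero_mul]
  have z2 : e i * vᵀ = 0 := by rw [← a6, ← mul_assoc, h.orth i k hik, zero_mul]
  have z3 : e i * yᵀ = 0 := by rw [← a5, ← mul_assoc, h.orth i j hij, zero_mul]
  have z4 : y * vᵀ = 0 := by rw [← a2, ← a6, mul_assoc, ← mul_assoc (e j), h.orth j k hjk]; simp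
  have : e i * ((y + yᵀ) * (v + vᵀ) + (v + vᵀ) * (y + yᵀ)) * e k
    = (e i * y) * (v * e k) + e i * (y * vᵀ) * e k + (e i * yᵀ) * (v + vᵀ) * e k
      + (e i * v) * (y + yᵀ) * e k + (e i * vᵀ) * (y + yᵀ) * e k := by noncomm_ring
  rw [this, a1, a4, z1, z2, z3, z4]; simp

lemma conn1 [IsAlgClosed F] (h : Fr A m e) {i j : Fin m} (hij : i ≠ j) (hne : Y A e i j ≠ ⊥) :
    ∃ u ∈ Y A e i j, u * uᵀ = e i ∧ uᵀ * u = e j := by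
  obtain ⟨y, hy, hy0⟩ := Submodule.exists_mem_ne_zero_of_ne_bot hne
  have : ∃ w ∈ Y A e i j, w * wᵀ ≠ 0 := by
    by_contra hc
    push Not at hc
    apply hy0
    refine h.Ynd hij hy fun v hv => ?_
    have := hc _ (Submodule.add_mem _ hy hv)
    rw [transpose_add, mul_add, add_mul, add_mul, hc y hy, hc v hv, zero_add, add_zero] at this
    rw [← this]; abel
  obtain ⟨w, hw, hw0⟩ := this
  obtain ⟨c, hc⟩ := h.Yn hw
  have hc0 : c ≠ 0 := by
    rintro rfl
    exact hw0 (by rw [hc, zero_smul])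
  obtain ⟨d, hd⟩ := IsAlgClosed.exists_pow_nat_eq c⁻¹ (n := 2) (by norm_num)
  have hu : d • w ∈ Y A e i j := Submodule.smul_mem _ _ hw
  have h1 : (d • w) * (d • w)ᵀ = e i := by
    rw [transpose_smul, smul_mul_smul_comm, hc, smul_smul, ← pow_two, hd, inv_mul_cancel₀ hc0,
      one_smul]
  refine ⟨d • w, hu, h1, ?_⟩
  obtain ⟨b, hb⟩ := h.Yn (h.Yt hu)
  rw [transpose_transpose] at hb
  have h3 : (d • w) * ((d • w)ᵀ * (d • w)) = d • w := by
    rw [← mul_assoc, h1, h.Yl hu]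
  rw [hb, mul_smul_comm, h.Yr hu] at h3
  have hu0 : d • w ≠ 0 := by
    intro h0
    rw [h0] at h1
    exact h.ne i (by rw [← h1]; simp)
  have : (b - 1) • (d • w) = 0 := by rw [sub_smul, h3, one_smul, sub_self]
  have hb1 : b = 1 := sub_eq_zero.mp ((smul_eq_zero.mp this).resolve_right hu0)
  rw [hb, hb1, one_smul]

lemma eu (h : Fr A m e) (i : Fin m) : e i ∈ Y A e i i :=
  mem_Y.mpr ⟨e i, h.mem i, by rw [h.idem, h.idem]⟩

/-- all idempotents are connected when `A` is simple -/
lemma conn [IsAlgClosed F] (h : Fr A m e) (hs : IsSimpleJordan F A) (i j : Fin m) :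
    ∃ u ∈ Y A e i j, u * uᵀ = e i ∧ uᵀ * u = e j := by
  by_cases hij : i = j
  · subst hij
    exact ⟨e i, h.eu i, by rw [h.esym, h.idem], by rw [h.esym, h.idem]⟩
  apply h.conn1 hij
  classical
  let K : Finset (Fin m) := Finset.univ.filter fun k => k = i ∨ Y A e i k ≠ ⊥
  let g := ∑ k ∈ K, e k
  have hK : ∀ k ∈ K, ∀ l, l ∉ K → ∀ a ∈ A, e k * a * e l = 0 := by
    intro k hk l hl a ha
    simp only [K, Finset.mem_filter, Finset.mem_univ, true_and, not_or, not_not] at hk hl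
    by_contra hne
    have hkl : k ≠ l := by
      rintro rfl
      rcases hk with rfl | hk
      · exact hl.1 rfl
      · exact hk hl.2
    have hY : Y A e k l ≠ ⊥ := by
      intro hb
      have : e k * a * e l ∈ Y A e k l := mem_Y.mpr ⟨a, ha, rfl⟩
      rw [hb, Submodule.mem_bot] at this
      exact hne this
    by_cases hki : k = i
    · subst hki; exact hY hl.2
    have hk := hk.resolve_left hki
    obtain ⟨u, hu, hu1, hu2⟩ := h.conn1 (Ne.symm hki) hk
    obtain ⟨v, hv, hv1, hv2⟩ := h.conn1 hkl hY
    have := h.Ymul (Ne.symm hki) (Ne.symm hl.1) hu hv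
    rw [hl.2, Submodule.mem_bot] at this
    apply h.ne i
    have e1 : u * v * (u * v)ᵀ = e i := by
      rw [transpose_mul, mul_assoc, ← mul_assoc v, hv1, ← mul_assoc, h.Yr hu, hu1]
    rw [← e1, this]; simp
  have hunit : (∑ k, e k) = g + ∑ k ∈ Kᶜ, e k := (Finset.sum_add_sum_compl K e).symm
  have hgA : ∀ a ∈ A, g * a * (∑ k ∈ Kᶜ, e k) = 0 := by
    intro a ha
    rw [Finset.mul_sum]
    refine Finset.sum_eq_zero fun l hl => ?_
    simp only [g]
    rw [Finset.sum_mul, Finset.sum_mul]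
    exact Finset.sum_eq_zero fun k hk => hK k hk l (Finset.mem_compl.mp hl) a ha
  have hgs : gᵀ = g := by
    simp only [g, transpose_sum, h.esym]
  have hga1 : ∀ a ∈ A, g * a = g * a * g := by
    intro a ha
    have : g * (a * ∑ k, e k) = g * a := by rw [(h.unit a ha).2]
    rw [hunit, mul_add, mul_add, ← mul_assoc, ← mul_assoc, hgA a ha, add_zero] at this
    exact this.symm
  have hcomm : ∀ a ∈ A, g * a = a * g := by
    intro a ha
    have := congrArg transpose (hga1 a ha)
    simp only [transpose_mul, hgs, h.sym a ha] at this
    rw [this, hga1 a ha, mul_assoc]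
  let I : Submodule F (Matrix (Fin n) (Fin n) F) :=
    { carrier := {a | a ∈ A ∧ g * a = a}
      zero_mem' := by simp
      add_mem' := by
        rintro a b ⟨h1, h3⟩ ⟨h5, h6⟩
        exact ⟨A.add_mem h1 h5, by rw [mul_add, h3, h6]⟩
      smul_mem' := by
        rintro c a ⟨h1, h3⟩
        exact ⟨A.smul_mem c h1, by rw [mul_smul_comm, h3]⟩ }
  have hgk : ∀ k, g * e k = if k ∈ K then e k else 0 := by
    intro k
    simp only [g]
    rw [Finset.sum_mul]
    split_ifs with hk
    · rw [Finset.sum_eq_single k, h.idem]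
      · intro l _ hl
        exact h.orth l k hl
      · intro hk'; exact absurd hk hk'
    · refine Finset.sum_eq_zero fun l hl => h.orth l k ?_
      rintro rfl
      exact hk hl
  have hI : I = A := by
    refine simple_ideal hs I (fun a ha => ha.1) ?_ ⟨e i, ⟨h.mem i, ?_⟩, h.ne i⟩
    · rintro x hx y ⟨hy, hy'⟩
      refine ⟨h.jc x hx y hy, ?_⟩
      rw [mul_add, ← mul_assoc, ← mul_assoc, hy', hcomm x hx, mul_assoc, hy']
    · rw [hgk, if_pos]
      simp [K]
  have hj : e j ∈ I := hI ▸ h.mem j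
  have hj2 : g * e j = e j := hj.2
  rw [hgk] at hj2
  split_ifs at hj2 with hjK
  · simp only [K, Finset.mem_filter, Finset.mem_univ, true_and] at hjK
    exact hjK.resolve_left (Ne.symm hij)
  · exact absurd hj2.symm (h.ne j)

end Fr

end Frames

section Dim

variable {F : Type*} [Field F] {n : ℕ}

lemma sym_trans {v : Fin n → F} (hv : v ≠ 0) (w : Fin n → F) :
    ∃ X : Matrix (Fin n) (Fin n) F, Xᵀ = X ∧ X *ᵥ v = w := by
  obtain ⟨k, hk⟩ := Function.ne_iff.mp hv
  have hk : v k ≠ 0 := hk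
  let d : Fin n → F := Pi.single k 1
  have hd : d ⬝ᵥ v = v k := by simp [d]
  refine ⟨(v k)⁻¹ • (vecMulVec w d + vecMulVec d w)
    - ((v k)⁻¹ * (v k)⁻¹ * (w ⬝ᵥ v)) • vecMulVec d d, ?_, ?_⟩
  · rw [transpose_sub, transpose_smul, transpose_smul, transpose_add, transpose_vecMulVec,
      transpose_vecMulVec, transpose_vecMulVec, add_comm]
  · rw [sub_mulVec, smul_mulVec, smul_mulVec, add_mulVec, vecMulVec_mulVec, vecMulVec_mulVec,
      vecMulVec_mulVec, hd]
    ext i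
    simp
    field_simp
    ring

lemma sym_zero {v p : Fin n → F} (hv : v ≠ 0)
    (h : ∀ X : Matrix (Fin n) (Fin n) F, Xᵀ = X → p ⬝ᵥ (X *ᵥ v) = 0) : p = 0 := by
  ext i
  obtain ⟨X, hX, hX'⟩ := sym_trans hv (Pi.single i 1)
  have := h X hX
  rw [hX'] at this
  simpa using this

lemma exists_noniso (h2 : (2 : F) ≠ 0) {E : Matrix (Fin n) (Fin n) F} (hs : Eᵀ = E)
    (hi : E * E = E) (h0 : E ≠ 0) : ∃ v, E *ᵥ v = v ∧ v ⬝ᵥ v ≠ 0 := by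
  by_contra hc
  push Not at hc
  have h : ∀ v, v ⬝ᵥ (E *ᵥ v) = 0 := by
    intro v
    have := hc (E *ᵥ v) (by rw [mulVec_mulVec, hi])
    rw [dotProduct_mulVec, ← mulVec_transpose, hs, mulVec_mulVec, hi, dotProduct_comm] at this
    exact this
  apply h0
  have hd : ∀ i, E i i = 0 := by
    intro i
    have := h (Pi.single i 1)
    simpa using this
  ext i j
  have := h (Pi.single i 1 + Pi.single j 1)
  simp only [mulVec_add, add_dotProduct, dotProduct_add, mulVec_single_one, single_dotProduct,
    one_mul, col_apply, hd, zero_add, add_zero] at this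
  have h3 : E j i = E i j := by conv_lhs => rw [← hs, transpose_apply]
  rw [h3, ← two_mul] at this
  simpa using (mul_eq_zero.mp this).resolve_left h2

lemma finrank_symSub_ge : n * (n + 1) ≤ 2 * Module.finrank F (symSub F n) := by
  let φ : (Sym2 (Fin n) → F) →ₗ[F] symSub F n :=
    { toFun := fun g => ⟨Matrix.of fun i j => g s(i, j), by
        change _ᵀ = _
        ext i j
        simp [Sym2.eq_swap]⟩
      map_add' := fun a b => rfl
      map_smul' := fun a b => rfl }
  have hφ : Function.Injective φ := by
    intro a b hab
    ext s
    induction s with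
    | _ i j =>
      have := congrArg (fun X => X.1 i j) hab
      exact this
  have := LinearMap.finrank_le_finrank_of_injective hφ
  rw [Module.finrank_fintype_fun_eq_card, Sym2.card, Fintype.card_fin, Nat.choose_two_right] at this
  have h3 : 2 ∣ (n + 1) * (n + 1 - 1) := by
    rw [Nat.add_sub_cancel, mul_comm]
    exact even_iff_two_dvd.mp (Nat.even_mul_succ_self n)
  have h4 := Nat.div_mul_cancel h3
  rw [Nat.add_sub_cancel] at *
  nlinarith

/-- A frame with connecting elements. -/
structure Cn (A : Submodule F (Matrix (Fin n) (Fin n) F)) (m : ℕ)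
    (e : Fin m → Matrix (Fin n) (Fin n) F) (z : Fin m)
    (u : Fin m → Matrix (Fin n) (Fin n) F) : Prop where
  fr : Fr A m e
  uY : ∀ i, u i ∈ Y A e z i
  uz : u z = e z
  ut : ∀ i, u i * (u i)ᵀ = e z
  tu : ∀ i, (u i)ᵀ * u i = e i

lemma exists_Cn [IsAlgClosed F] (h2 : (2 : F) ≠ 0) {A : Submodule F (Matrix (Fin n) (Fin n) F)}
    (hc : ∀ x ∈ A, ∀ y ∈ A, jp x y ∈ A) (hsy : A ≤ symSub F n) (hs : IsSimpleJordan F A) :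
    ∃ m e z u, Cn A m e z u := by
  have hJ := JC_of h2 hc
  have hN := ND_of_simple h2 hJ hs
  obtain ⟨m, e, h⟩ := exists_Fr h2 hJ hN (fun a ha => hsy ha)
  have hm : 0 < m := by
    rcases Nat.eq_zero_or_pos m with rfl | hm
    · exfalso
      obtain ⟨⟨x, hx, y, hy, hxy⟩, -⟩ := hs
      have hx0 := (h.unit x hx).1
      simp only [Finset.univ_eq_empty, Finset.sum_empty, zero_mul] at hx0
      apply hxy
      simp [jp, ← hx0]
    · exact hm
  let z : Fin m := ⟨0, hm⟩
  choose u hu1 hu2 hu3 using h.conn hs z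
  refine ⟨m, e, z, fun i => if i = z then e z else u i, h, ?_, by simp, ?_, ?_⟩
  · intro i
    by_cases hi : i = z
    · subst hi; simpa using h.eu z
    · simpa [hi] using hu1 i
  · intro i
    by_cases hi : i = z
    · subst hi; simp [h.esym, h.idem]
    · simpa [hi] using hu2 i
  · intro i
    by_cases hi : i = z
    · subst hi; simp [h.esym, h.idem]
    · simpa [hi] using hu3 i

/-- evaluation at a vector -/
def ev (v : Fin n → F) : Matrix (Fin n) (Fin n) F →ₗ[F] (Fin n → F) where
  toFun X := X *ᵥ v
  map_add' X Y := add_mulVec X Y v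
  map_smul' c X := smul_mulVec c X v

namespace Cn

variable {A : Submodule F (Matrix (Fin n) (Fin n) F)} {m : ℕ}
  {e : Fin m → Matrix (Fin n) (Fin n) F} {z : Fin m} {u : Fin m → Matrix (Fin n) (Fin n) F}

lemma el (h : Cn A m e z u) (i : Fin m) : e z * u i = u i := h.fr.Yl (h.uY i)

lemma er (h : Cn A m e z u) (i : Fin m) : u i * e i = u i := h.fr.Yr (h.uY i)

lemma tl (h : Cn A m e z u) (i : Fin m) : e i * (u i)ᵀ = (u i)ᵀ := h.fr.Yl (h.fr.Yt (h.uY i))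

lemma tr (h : Cn A m e z u) (i : Fin m) : (u i)ᵀ * e z = (u i)ᵀ := h.fr.Yr (h.fr.Yt (h.uY i))

lemma uo (h : Cn A m e z u) {i j : Fin m} (hij : i ≠ j) : u i * (u j)ᵀ = 0 := by
  rw [← h.er i, ← h.tl j, mul_assoc, ← mul_assoc (e i), h.fr.orth i j hij]; simp

lemma uu (h : Cn A m e z u) (i j : Fin m) : (u i)ᵀ * u j ∈ Y A e i j := by
  by_cases hij : i = j
  · subst hij
    rw [h.tu]; exact h.fr.eu i
  by_cases hiz : i = z
  · subst hiz
    rw [h.uz, h.fr.esym, h.el]; exact h.uY j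
  · exact h.fr.Ymul hiz hij (h.fr.Yt (h.uY i)) (h.uY j)

lemma rank_pos (h : Cn A m e z u) : 0 < (e z).rank := by
  rcases Nat.eq_zero_or_pos (e z).rank with h0 | h0
  · exact absurd (Matrix.ext_of_mulVec_single fun i => by
      have h1 : LinearMap.range (e z).mulVecLin = ⊥ := Submodule.finrank_eq_zero.mp h0
      have h2 : e z *ᵥ Pi.single i 1 ∈ LinearMap.range (e z).mulVecLin := ⟨_, rfl⟩
      rw [h1, Submodule.mem_bot] at h2
      rw [h2, zero_mulVec]) (h.fr.ne z)
  · exact h0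

lemma mr_le (h : Cn A m e z u) : m * (e z).rank ≤ n := by
  let φ : (Fin m → LinearMap.range (e z).mulVecLin) →ₗ[F] (Fin n → F) :=
    ∑ i, (u i)ᵀ.mulVecLin ∘ₗ (LinearMap.range (e z).mulVecLin).subtype ∘ₗ LinearMap.proj i
  have hφ : Function.Injective φ := by
    rw [← LinearMap.ker_eq_bot, LinearMap.ker_eq_bot']
    intro w hw
    ext1 j
    have h1 : u j *ᵥ (φ w) = (w j : Fin n → F) := by
      simp only [φ, LinearMap.sum_apply, LinearMap.comp_apply, mulVecLin_apply,
        LinearMap.proj_apply, Submodule.subtype_apply, mulVec_sum, mulVec_mulVec]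
      rw [Finset.sum_eq_single j, h.ut]
      · obtain ⟨x, hx⟩ := (w j).2
        rw [← hx, mulVecLin_apply, mulVec_mulVec, h.fr.idem]
      · intro i _ hi
        rw [h.uo hi.symm, zero_mulVec]
      · simp
    rw [hw, mulVec_zero] at h1
    exact Subtype.ext h1.symm
  have := LinearMap.finrank_le_finrank_of_injective hφ
  rw [Module.finrank_pi_fintype] at this
  simpa [Matrix.rank] using this

lemma zero_of (h : Cn A m e z u) {i j : Fin m} (hij : i ≠ j) {y : Matrix (Fin n) (Fin n) F}
    (hy : y ∈ Y A e i j) {v : Fin n → F} (hv : e j *ᵥ v = v) (hvv : v ⬝ᵥ v ≠ 0)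
    (h0 : y *ᵥ v = 0) : y = 0 := by
  have h1 : yᵀ = 0 := by
    refine h.fr.Ynd hij.symm (h.fr.Yt hy) fun w hw => ?_
    obtain ⟨c, hc⟩ := h.fr.Yq (h.fr.Yt hy) hw
    rw [hc]
    have h3 := congrArg (fun X => v ⬝ᵥ (X *ᵥ v)) hc
    simp only [transpose_transpose, add_mulVec, ← mulVec_mulVec, h0, mulVec_zero, add_zero,
      smul_mulVec, hv, dotProduct_smul, smul_eq_mul] at h3
    rw [dotProduct_mulVec, vecMul_transpose, h0, zero_dotProduct] at h3
    rw [(mul_eq_zero.mp h3.symm).resolve_right hvv, zero_smul]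
  rw [← transpose_transpose y, h1, transpose_zero]

lemma eq_zero (h : Cn A m e z u) {a : Matrix (Fin n) (Fin n) F} (ha : a ∈ A)
    (h0 : ∀ i j, e i * a * e j = 0) : a = 0 := by
  rw [← (h.fr.unit a ha).1, ← (h.fr.unit a ha).2, ← mul_assoc, Finset.mul_sum]
  refine Finset.sum_eq_zero fun j _ => ?_
  rw [Finset.sum_mul, Finset.sum_mul]
  exact Finset.sum_eq_zero fun i _ => h0 i j

lemma finrank_le (h : Cn A m e z u) :
    2 * Module.finrank F A ≤ 2 * m + (e z).rank * (m * (m - 1)) := by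
  choose v hv hvv using fun i => exists_noniso h.fr.two (h.fr.esym i) (h.fr.idem i) (h.fr.ne i)
  let lt : (j : Fin m) → Fin j → Fin m := fun j i => ⟨i, i.2.trans j.2⟩
  let ψ : (j : Fin m) → A →ₗ[F] (Fin j → LinearMap.range (e z).mulVecLin) := fun j =>
    LinearMap.pi fun i => (e z).mulVecLin.rangeRestrict ∘ₗ (u (lt j i)).mulVecLin ∘ₗ ev (v j)
      ∘ₗ A.subtype
  let δ : (j : Fin m) → A →ₗ[F] F := fun j =>
    (LinearMap.toSpanSingleton F F 1) ∘ₗ (dotProductBilin F F (v j)) ∘ₗ ev (v j) ∘ₗ A.subtype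
  let φ : A →ₗ[F] (Fin m → F) × ((j : Fin m) → Fin j → LinearMap.range (e z).mulVecLin) :=
    (LinearMap.pi δ).prod (LinearMap.pi ψ)
  have hφ : Function.Injective φ := by
    rw [← LinearMap.ker_eq_bot, LinearMap.ker_eq_bot']
    intro a ha
    have h1 : ∀ j, v j ⬝ᵥ (a.1 *ᵥ v j) = 0 := fun j => by
      have := congrFun (congrArg Prod.fst ha) j
      simpa [φ, δ, ev] using this
    have h2 : ∀ i j, i < j → u i *ᵥ (a.1 *ᵥ v j) = 0 := fun i j hij => by
      have := congrArg Subtype.val (congrFun (congrFun (congrArg Prod.snd ha) j) ⟨i.1, hij⟩)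
      simpa [φ, ψ, ev, lt, h.el, mulVec_mulVec, ← mul_assoc] using this
    have h3 : ∀ i j, i < j → e i * a.1 * e j = 0 := fun i j hij => by
      refine h.zero_of hij.ne (mem_Y.mpr ⟨a.1, a.2, rfl⟩) (hv j) (hvv j) ?_
      rw [← mulVec_mulVec, hv, ← h.tu i, ← mulVec_mulVec, ← mulVec_mulVec, h2 i j hij, mulVec_zero]
    refine Subtype.ext (h.eq_zero a.2 fun i j => ?_)
    rcases lt_trichotomy i j with hij | rfl | hij
    · exact h3 i j hij
    · obtain ⟨c, hc⟩ := h.fr.prim i a.1 a.2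
      have h5 := congrArg (fun X => v i ⬝ᵥ (X *ᵥ v i)) hc
      simp only [← mulVec_mulVec, hv, smul_mulVec, dotProduct_smul, smul_eq_mul] at h5
      rw [dotProduct_mulVec, ← mulVec_transpose, h.fr.esym, hv, h1] at h5
      rw [hc, (mul_eq_zero.mp h5.symm).resolve_right (hvv i), zero_smul]
    · have := congrArg transpose (h3 j i hij)
      rw [transpose_mul, transpose_mul, h.fr.esym, h.fr.esym, h.fr.sym _ a.2, ← mul_assoc] at this
      simpa using this
  have := LinearMap.finrank_le_finrank_of_injective hφ
  rw [Module.finrank_prod, Module.finrank_fintype_fun_eq_card, Module.finrank_pi_fintype] at this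
  simp only [Module.finrank_pi_fintype, Finset.sum_const, Finset.card_univ, Fintype.card_fin,
    smul_eq_mul] at this
  rw [← Finset.sum_mul, Fin.sum_univ_eq_sum_range (fun i => i)] at this
  have h6 := Finset.sum_range_id_mul_two m
  change _ ≤ m + _ * (e z).rank at this
  calc _ ≤ 2 * (m + (∑ i ∈ Finset.range m, i) * (e z).rank) := by omega
    _ = 2 * m + (e z).rank * ((∑ i ∈ Finset.range m, i) * 2) := by ring
    _ = _ := by rw [h6]

lemma dim_lt (h : Cn A m e z u) (hr : 2 ≤ (e z).rank) :
    2 * Module.finrank F A < Module.finrank F (symSub F n) := by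
  have h1 := h.finrank_le
  have h2 := h.mr_le
  have h3 := finrank_symSub_ge (F := F) (n := n)
  have hm : 0 < m := z.pos
  obtain ⟨k, rfl⟩ : ∃ k, m = k + 1 := ⟨m - 1, by omega⟩
  obtain ⟨s, hs⟩ : ∃ s, (e z).rank = s + 2 := ⟨(e z).rank - 2, by omega⟩
  rw [hs] at h1 h2
  rw [Nat.add_sub_cancel] at h1
  have h4 : (k + 1) * (s + 2) * ((k + 1) * (s + 2) + 1) ≤ n * (n + 1) :=
    Nat.mul_le_mul h2 (by omega)
  have h5 : 2 * (2 * (k + 1) + (s + 2) * ((k + 1) * k)) < (k + 1) * (s + 2) * ((k + 1) * (s + 2) + 1) := by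
    have : (k + 1) * (s + 2) * ((k + 1) * (s + 2) + 1)
      = 2 * (2 * (k + 1) + (s + 2) * ((k + 1) * k)) + ((k+1) * ((k + 1) * (s * (s + 2)) + 2 + 3 * s)) := by
      ring
    rw [this]
    have : 0 < ((k+1) * ((k + 1) * (s * (s + 2)) + 2 + 3 * s)) := by positivity
    omega
  omega

lemma rank_one_corner (h : Cn A m e z u) (hr : (e z).rank = 1) (X : Matrix (Fin n) (Fin n) F) :
    ∃ c : F, e z * X * e z = c • e z := by
  obtain ⟨v, hv, hvv⟩ := exists_noniso h.fr.two (h.fr.esym z) (h.fr.idem z) (h.fr.ne z)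
  have hv0 : v ≠ 0 := by rintro rfl; simp at hvv
  have hE : e z = (v ⬝ᵥ v)⁻¹ • vecMulVec v v := by
    have h1 := (finrank_eq_one_iff_of_nonzero' (K := F)
      (⟨v, v, by rw [mulVecLin_apply, hv]⟩ : LinearMap.range (e z).mulVecLin)
      (fun hh => hv0 (congrArg Subtype.val hh))).mp hr
    refine Matrix.ext_of_mulVec_single fun i => ?_
    obtain ⟨c, hc⟩ := h1 ⟨e z *ᵥ Pi.single i 1, _, rfl⟩
    have hc : c • v = e z *ᵥ Pi.single i 1 := congrArg Subtype.val hc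
    have h2 := congrArg (fun w => v ⬝ᵥ w) hc
    simp only [dotProduct_smul, smul_eq_mul] at h2
    rw [dotProduct_mulVec, ← mulVec_transpose, h.fr.esym, hv] at h2
    rw [← hc, smul_mulVec, vecMulVec_mulVec, ← h2]
    ext k
    simp
    field_simp
  refine ⟨(v ⬝ᵥ v)⁻¹ * (v ⬝ᵥ (X *ᵥ v)), ?_⟩
  rw [hE, smul_mul_assoc, smul_mul_smul_comm, vecMulVec_mul, vecMulVec_mul_vecMulVec,
    ← dotProduct_mulVec, vecMulVec_smul, smul_smul, smul_smul]
  congr 1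
  ring

lemma top_of_rank_one (h : Cn A m e z u) (hr : (e z).rank = 1) (hf : ∑ i, e i = 1) :
    symSub F n ≤ A := by
  intro X hX
  have hX : Xᵀ = X := hX
  have h1 : ∀ i j, e i * X * e j + (e i * X * e j)ᵀ ∈ A := by
    intro i j
    obtain ⟨c, hc⟩ := h.rank_one_corner hr (u i * X * (u j)ᵀ)
    have : e i * X * e j = c • ((u i)ᵀ * u j) := by
      have h2 : (u i)ᵀ * (e z * (u i * X * (u j)ᵀ) * e z) * u j = e i * X * e j := by
        rw [← h.tu i, ← h.tu j]
        have : (u i)ᵀ * (e z * (u i * X * (u j)ᵀ) * e z) * u j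
          = ((u i)ᵀ * e z) * (u i * X * (u j)ᵀ) * (e z * u j) := by noncomm_ring
        rw [this, h.el, h.tr]; noncomm_ring
      rw [← h2, hc, mul_smul_comm, smul_mul_assoc, h.tr]
    rw [this, transpose_smul, ← smul_add]
    exact A.smul_mem _ (h.fr.Ysum (h.uu i j))
  have h3 : X = ∑ i, ∑ j, e i * X * e j := by
    simp_rw [← Finset.mul_sum, ← Finset.sum_mul, hf]; simp
  have h4 : X = (2 : F)⁻¹ • ∑ i, ∑ j, (e i * X * e j + (e i * X * e j)ᵀ) := by
    simp_rw [Finset.sum_add_distrib, ← transpose_sum]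
    rw [← h3, hX, ← two_smul F, smul_smul, inv_mul_cancel₀ h.fr.two, one_smul]
  rw [h4]
  exact A.smul_mem _ (A.sum_mem fun i _ => A.sum_mem fun j _ => h1 i j)

end Cn

end Dim

section Quat

variable {F : Type*} [Field F] {n : ℕ}

/-- A composition-type algebra of matrices in the corner of `E`. -/
structure CA (D : Submodule F (Matrix (Fin n) (Fin n) F)) (E : Matrix (Fin n) (Fin n) F) :
    Prop where
  two : (2 : F) ≠ 0
  sym : Eᵀ = E
  idem : E * E = E
  ne : E ≠ 0
  mem : E ∈ D
  l : ∀ x ∈ D, E * x = x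
  r : ∀ x ∈ D, x * E = x
  tr : ∀ x ∈ D, ∃ c : F, x + xᵀ = c • E
  nd : ∀ x ∈ D, (∀ w ∈ D, x * wᵀ + w * xᵀ = 0) → x = 0

namespace CA

variable {D : Submodule F (Matrix (Fin n) (Fin n) F)} {E : Matrix (Fin n) (Fin n) F}

lemma t (h : CA D E) {x : Matrix (Fin n) (Fin n) F} (hx : x ∈ D) : xᵀ ∈ D := by
  obtain ⟨c, hc⟩ := h.tr x hx
  rw [eq_sub_of_add_eq' hc]
  exact D.sub_mem (D.smul_mem _ h.mem) hx

lemma skew_part (h : CA D E) {x : Matrix (Fin n) (Fin n) F} (hx : x ∈ D) :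
    ∃ c : F, ∃ y ∈ D, yᵀ = -y ∧ x = c • E + y := by
  obtain ⟨c, hc⟩ := h.tr x hx
  refine ⟨2⁻¹ * c, x - (2⁻¹ * c) • E, D.sub_mem hx (D.smul_mem _ h.mem), ?_, by abel⟩
  rw [transpose_sub, transpose_smul, h.sym, eq_sub_of_add_eq' hc]
  have : c • E = (2⁻¹ * c) • E + (2⁻¹ * c) • E := by
    rw [← add_smul, ← two_mul, ← mul_assoc, mul_inv_cancel₀ h.two, one_mul]
  rw [this]; abel

lemma core (h : CA D E) (hm : ∀ x ∈ D, ∀ y ∈ D, x * y ∈ D) {p : Matrix (Fin n) (Fin n) F}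
    (hp : p ∈ D) (hpp : p * p = p) (hpq : p * pᵀ = 0) (hqp : pᵀ * p = 0) (hE : p + pᵀ = E)
    {x₀ : Matrix (Fin n) (Fin n) F} (hx₀ : x₀ ∈ D) (hne : p * x₀ * pᵀ ≠ 0) :
    ∃ s : Matrix (Fin n) (Fin n) F, s ≠ 0 ∧ sᵀ = -s ∧ E * s = s ∧ s * E = s ∧
      ∀ w ∈ D, s * w = w * s := by
  obtain ⟨q, hq⟩ : ∃ q, q = pᵀ := ⟨_, rfl⟩
  have hqt : qᵀ = p := by rw [hq, transpose_transpose]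
  have hqD : q ∈ D := hq ▸ h.t hp
  rw [← hq] at hpq hqp hE hne
  have hqq : q * q = q := by rw [hq, ← transpose_mul, hpp]
  have hp0 : p ≠ 0 := by
    rintro rfl
    simp at hne
  have hq0 : q ≠ 0 := by
    rintro rfl
    simp at hne
  have hpE : p * E = p := h.r p hp
  have hqE : q * E = q := h.r q hqD
  have PP : ∀ w ∈ D, ∃ c : F, p * w * p = c • p := by
    intro w hw
    obtain ⟨c, hc⟩ := h.tr _ (hm _ (hm _ hp _ hw) _ hp)
    refine ⟨c, ?_⟩
    have := congrArg (fun z => p * z) hc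
    simp only [transpose_mul, ← hq, mul_add, mul_smul_comm, hpE, ← mul_assoc, hpp, hpq,
      zero_mul, add_zero] at this
    exact this
  have PQ : ∀ w ∈ D, (p * w * q)ᵀ = -(p * w * q) := by
    intro w hw
    obtain ⟨c, hc⟩ := h.tr _ (hm _ (hm _ hp _ hw) _ hqD)
    have := congrArg (fun z => q * z) hc
    simp only [transpose_mul, ← hq, hqt, mul_add, mul_smul_comm, hqE, ← mul_assoc, hqp,
      zero_mul, add_zero] at this
    rw [(smul_eq_zero.mp this.symm).resolve_right hq0, zero_smul] at hc
    exact eq_neg_of_add_eq_zero_right hc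
  have QP : ∀ w ∈ D, (q * w * p)ᵀ = -(q * w * p) := by
    intro w hw
    obtain ⟨c, hc⟩ := h.tr _ (hm _ (hm _ hqD _ hw) _ hp)
    have := congrArg (fun z => p * z) hc
    simp only [transpose_mul, ← hq, hqt, mul_add, mul_smul_comm, hpE, ← mul_assoc, hpq,
      zero_mul, add_zero] at this
    rw [(smul_eq_zero.mp this.symm).resolve_right hp0, zero_smul] at hc
    exact eq_neg_of_add_eq_zero_right hc
  obtain ⟨x, hx⟩ : ∃ x, x = p * x₀ * q := ⟨_, rfl⟩
  rw [← hx] at hne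
  have hxD : x ∈ D := hx ▸ hm _ (hm _ hp _ hx₀) _ hqD
  have hxt : xᵀ = -x := by rw [hx]; exact PQ _ hx₀
  have hpx : p * x = x := by rw [hx, ← mul_assoc, ← mul_assoc, hpp]
  have hxq : x * q = x := by rw [hx, mul_assoc, hqq]
  have hxp : x * p = 0 := by rw [← hxq, mul_assoc, hqp, mul_zero]
  have hqx : q * x = 0 := by rw [← hpx, ← mul_assoc, hqp, zero_mul]
  obtain ⟨y, hyD, hqy, hyp, hyt, hxy⟩ : ∃ y ∈ D, q * y = y ∧ y * p = y ∧ yᵀ = -y ∧ x * y = p := by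
    have : ∃ w ∈ D, x * wᵀ + w * xᵀ ≠ 0 := by
      by_contra hc
      push Not at hc
      exact hne (h.nd x hxD hc)
    obtain ⟨w, hw, hw0⟩ := this
    obtain ⟨c, hc⟩ := h.tr _ (hm _ hxD _ (h.t hw))
    rw [transpose_mul, transpose_transpose] at hc
    have hc0 : c ≠ 0 := by
      rintro rfl
      rw [zero_smul] at hc
      exact hw0 hc
    have h1 : x * wᵀ * p = c • p := by
      have := congrArg (fun z => p * z * p) hc
      simp only [hxt, mul_add, add_mul, mul_smul_comm, hpE, smul_mul_assoc, hpp] at this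
      rw [← this, mul_assoc p (w * -x) p, mul_assoc w, neg_mul, hxp, ← mul_assoc p x, hpx]
      simp
    refine ⟨c⁻¹ • (q * wᵀ * p), D.smul_mem _ (hm _ (hm _ hqD _ (h.t hw)) _ hp), ?_, ?_, ?_, ?_⟩
    · rw [mul_smul_comm, ← mul_assoc, ← mul_assoc, hqq]
    · rw [smul_mul_assoc, mul_assoc _ p p, hpp]
    · rw [transpose_smul, QP _ (h.t hw), smul_neg]
    · rw [mul_smul_comm, ← mul_assoc, ← mul_assoc, hxq, h1, smul_smul, inv_mul_cancel₀ hc0,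
        one_smul]
  have hyx : y * x = q := by
    have := congrArg transpose hxy
    rw [transpose_mul, hxt, hyt, neg_mul_neg, ← hq] at this
    exact this
  have hpy : p * y = 0 := by rw [← hqy, ← mul_assoc, hpq, zero_mul]
  have hyy : y * y = 0 := by
    have : y * y = y * (p * y) := by rw [← mul_assoc, hyp]
    rw [this, hpy, mul_zero]
  obtain ⟨w, hw⟩ : ∃ w, p *ᵥ w ≠ 0 := by
    by_contra hc
    push Not at hc
    exact hp0 (Matrix.ext_of_mulVec_single fun i => by rw [hc, zero_mulVec])
  obtain ⟨t, ht⟩ : ∃ t, t = vecMulVec (p *ᵥ w) (p *ᵥ w) := ⟨_, rfl⟩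
  have htt : tᵀ = t := by rw [ht, transpose_vecMulVec]
  have hpt : p * t = t := by rw [ht, mul_vecMulVec, mulVec_mulVec, hpp]
  have htq : t * q = t := by
    have := congrArg transpose hpt
    rw [transpose_mul, htt, ← hq] at this
    exact this
  have hqt0 : q * t = 0 := by rw [← hpt, ← mul_assoc, hqp, zero_mul]
  have htp : t * p = 0 := by rw [← htq, mul_assoc, hqp, mul_zero]
  have ht0 : t ≠ 0 := by
    intro h0
    obtain ⟨k, hk⟩ := Function.ne_iff.mp hw
    have hk : (p *ᵥ w) k ≠ 0 := hk
    have := congrFun (congrFun (ht.symm.trans h0) k) k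
    simp [vecMulVec_apply, hk] at this
  have hxt0 : x * t = 0 := by rw [← hxq, mul_assoc, hqt0, mul_zero]
  have htx : t * x = 0 := by rw [← hpx, ← mul_assoc, htp, zero_mul]
  have hEt : E * t = t := by rw [← hE, add_mul, hpt, hqt0, add_zero]
  have htE : t * E = t := by rw [← hE, mul_add, htp, htq, zero_add]
  obtain ⟨s, hs⟩ : ∃ s, s = t * y + y * t := ⟨_, rfl⟩
  have hsx : s * x = t := by
    rw [hs, add_mul, mul_assoc, hyx, htq, mul_assoc, htx, mul_zero, add_zero]
  have hxs : x * s = t := by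
    rw [hs, mul_add, ← mul_assoc, hxt0, zero_mul, zero_add, ← mul_assoc, hxy, hpt]
  have hps : p * s = t * y := by
    rw [hs, mul_add, ← mul_assoc, hpt, ← mul_assoc, hpy, zero_mul, add_zero]
  have hsp : s * p = t * y := by
    rw [hs, add_mul, mul_assoc, hyp, mul_assoc, htp, mul_zero, add_zero]
  have hys : y * s = y * t * y := by
    rw [hs, mul_add, ← mul_assoc, ← mul_assoc, hyy, zero_mul, add_zero]
  have hsy : s * y = y * t * y := by
    rw [hs, add_mul, mul_assoc, hyy, mul_zero, zero_add]
  have hEs : E * s = s := by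
    rw [hs, mul_add, ← mul_assoc, hEt, ← mul_assoc, h.l y hyD]
  have hsE : s * E = s := by
    rw [hs, add_mul, mul_assoc, h.r y hyD, mul_assoc, htE]
  have hsq : s * q = q * s := by
    have e1 : q = E - p := by rw [← hE]; abel
    rw [e1, mul_sub, sub_mul, hsE, hEs, hsp, hps]
  refine ⟨s, ?_, ?_, hEs, hsE, ?_⟩
  · rintro h0
    rw [h0, zero_mul] at hsx
    exact ht0 hsx.symm
  · rw [hs, transpose_add, transpose_mul, transpose_mul, htt, hyt]; noncomm_ring
  · intro w hw
    obtain ⟨α, hα⟩ := PP w hw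
    obtain ⟨β, hβ⟩ := PP _ (h.t hw)
    have hβ' : q * w * q = β • q := by
      have := congrArg transpose hβ
      simpa [transpose_mul, ← hq, mul_assoc] using this
    obtain ⟨μ, hμ⟩ := PP _ (hm _ hw _ hyD)
    have hμ' : p * w * q = μ • x := by
      have e1 : p * w * q = (p * (w * y) * p) * x := by
        rw [mul_assoc _ p x, hpx, ← hyx]; noncomm_ring
      rw [e1, hμ, smul_mul_assoc, hpx]
    obtain ⟨ν, hν⟩ := PP _ (hm _ hxD _ hw)
    have hν' : q * w * p = ν • y := by
      have e1 : q * w * p = y * (p * (x * w) * p) := by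
        have : y * (p * (x * w) * p) = (y * p) * (x * w) * p := by noncomm_ring
        rw [this, hyp, ← hyx]; noncomm_ring
      rw [e1, hν, mul_smul_comm, hyp]
    have e2 : w = α • p + μ • x + ν • y + β • q := by
      have e3 : w = E * w * E := by rw [h.l w hw, h.r w hw]
      rw [← hα, ← hμ', ← hν', ← hβ', e3, ← hE]
      have e4 : ∀ X : Matrix (Fin n) (Fin n) F, p * ((p + q) * X * (p + q)) * p
        = (p * p + p * q) * X * (p * p + q * p) := fun X => by noncomm_ring
      have e5 : ∀ X : Matrix (Fin n) (Fin n) F, p * ((p + q) * X * (p + q)) * q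
        = (p * p + p * q) * X * (p * q + q * q) := fun X => by noncomm_ring
      have e6 : ∀ X : Matrix (Fin n) (Fin n) F, q * ((p + q) * X * (p + q)) * p
        = (q * p + q * q) * X * (p * p + q * p) := fun X => by noncomm_ring
      have e7 : ∀ X : Matrix (Fin n) (Fin n) F, q * ((p + q) * X * (p + q)) * q
        = (q * p + q * q) * X * (p * q + q * q) := fun X => by noncomm_ring
      rw [e4, e5, e6, e7, hpp, hqq, hpq, hqp]
      noncomm_ring
    rw [e2]
    simp only [mul_add, add_mul, mul_smul_comm, smul_mul_assoc, hsp, hps, hsx, hxs, hsy, hys, hsq]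

lemma exists_unit_skew [IsAlgClosed F] (h : CA D E) (hm : ∀ x ∈ D, ∀ y ∈ D, x * y ∈ D)
    {x : Matrix (Fin n) (Fin n) F} (hx : x ∈ D) (hxt : xᵀ = -x) (hx0 : x ≠ 0) :
    ∃ i ∈ D, iᵀ = -i ∧ i * i = E := by
  have : ∃ w ∈ D, wᵀ = -w ∧ w * w ≠ 0 := by
    by_contra hc
    push Not at hc
    apply hx0
    refine h.nd x hx fun w hw => ?_
    obtain ⟨c, y, hy, hyt, rfl⟩ := h.skew_part hw
    have h1 := hc (x + y) (D.add_mem hx hy) (by rw [transpose_add, hxt, hyt]; abel)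
    rw [mul_add, add_mul, add_mul, hc x hx hxt, hc y hy hyt, zero_add, add_zero] at h1
    have : x * (c • E + y)ᵀ + (c • E + y) * xᵀ = c • (x * E) - c • (E * x) - (y * x + x * y) := by
      rw [transpose_add, transpose_smul, h.sym, hxt, hyt, mul_add, add_mul, mul_smul_comm,
        smul_mul_assoc, mul_neg, mul_neg, mul_neg, smul_neg]
      abel
    rw [this, h1, h.l x hx, h.r x hx]; simp
  obtain ⟨w, hw, hwt, hw0⟩ := this
  obtain ⟨c, hc⟩ := h.tr _ (hm _ hw _ hw)
  rw [transpose_mul, hwt, neg_mul_neg, ← two_smul F] at hc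
  have hc0 : c ≠ 0 := by
    rintro rfl
    rw [zero_smul] at hc
    exact hw0 ((smul_eq_zero.mp hc).resolve_left h.two)
  obtain ⟨d, hd⟩ := IsAlgClosed.exists_pow_nat_eq (2 * c⁻¹) (n := 2) (by norm_num)
  refine ⟨d • w, D.smul_mem _ hw, by rw [transpose_smul, hwt, smul_neg], ?_⟩
  rw [smul_mul_smul_comm, ← pow_two, hd, mul_comm, mul_smul, hc, smul_smul, inv_mul_cancel₀ hc0,
    one_smul]

lemma exists_s [IsAlgClosed F] (h : CA D E) (hm : ∀ x ∈ D, ∀ y ∈ D, x * y ∈ D)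
    {x : Matrix (Fin n) (Fin n) F} (hx : x ∈ D) (hxt : xᵀ = -x) (hx0 : x ≠ 0) :
    ∃ s : Matrix (Fin n) (Fin n) F, s ≠ 0 ∧ sᵀ = -s ∧ E * s = s ∧ s * E = s ∧
      ∀ w ∈ D, s * w = w * s := by
  obtain ⟨i, hi, hit, hii⟩ := h.exists_unit_skew hm hx hxt hx0
  have hi0 : i ≠ 0 := by
    rintro rfl
    exact h.ne (by rw [← hii, zero_mul])
  by_cases hcom : ∀ w ∈ D, i * w = w * i
  · exact ⟨i, hi0, hit, h.l i hi, h.r i hi, hcom⟩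
  push Not at hcom
  obtain ⟨w, hw, hwne⟩ := hcom
  have hEi := h.l i hi
  have hiE := h.r i hi
  have h22 : (2 : F)⁻¹ * 2 = 1 := inv_mul_cancel₀ h.two
  obtain ⟨p, hp⟩ : ∃ p, p = (2 : F)⁻¹ • (E + i) := ⟨_, rfl⟩
  have hpt : pᵀ = (2 : F)⁻¹ • (E - i) := by
    rw [hp, transpose_smul, transpose_add, h.sym, hit, sub_eq_add_neg]
  have hpD : p ∈ D := hp ▸ D.smul_mem _ (D.add_mem h.mem hi)
  have hpp : p * p = p := by
    rw [hp, smul_mul_smul_comm, mul_add, add_mul, add_mul, h.idem, hii, hEi, hiE]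
    have : E + i + (i + E) = (2 : F) • (E + i) := by rw [two_smul]; abel
    rw [this, smul_smul, mul_assoc, h22, mul_one]
  have hpq : p * pᵀ = 0 := by
    rw [hpt, hp, smul_mul_smul_comm, mul_sub, add_mul, add_mul, h.idem, hii, hEi, hiE]
    have : E + i - (i + E) = 0 := by abel
    rw [this, smul_zero]
  have hqp : pᵀ * p = 0 := by
    rw [hpt, hp, smul_mul_smul_comm, mul_add, sub_mul, sub_mul, h.idem, hii, hEi, hiE]
    have : E - i + (i - E) = 0 := by abel
    rw [this, smul_zero]
  have hE : p + pᵀ = E := by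
    rw [hpt, hp, ← smul_add]
    have : E + i + (E - i) = (2 : F) • E := by rw [two_smul]; abel
    rw [this, smul_smul, h22, one_smul]
  have hi2 : p - pᵀ = i := by
    rw [hpt, hp, ← smul_sub]
    have : E + i - (E - i) = (2 : F) • i := by rw [two_smul]; abel
    rw [this, smul_smul, h22, one_smul]
  by_cases h1 : p * w * pᵀ = 0
  · by_cases h3 : pᵀ * w * p = 0
    · exfalso
      apply hwne
      have hl := h.l w hw
      have hr := h.r w hw
      have e1 : p * w = p * w * p := by
        have : p * w * E = p * w := by rw [mul_assoc, hr]
        rw [← hE, mul_add, h1, add_zero] at this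
        exact this.symm
      have e2 : w * p = p * w * p := by
        have : E * (w * p) = w * p := by rw [← mul_assoc, hl]
        rw [← hE, add_mul, ← mul_assoc, ← mul_assoc, h3, add_zero] at this
        exact this.symm
      have e3 : i = p + p - E := by rw [← hi2, ← hE]; abel
      rw [e3, sub_mul, mul_sub, add_mul, mul_add, hl, hr, e2, ← e1]
    · have hqq : pᵀ * pᵀ = pᵀ := by rw [← transpose_mul, hpp]
      refine h.core hm (h.t hpD) hqq ?_ ?_ ?_ hw ?_
      · rw [transpose_transpose]; exact hqp
      · rw [transpose_transpose]; exact hpq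
      · rw [transpose_transpose, add_comm]; exact hE
      · rw [transpose_transpose]; exact h3
  · exact h.core hm hpD hpp hpq hqp hE hw h1

end CA

end Quat

section Skew

variable {F : Type*} [Field F] {n : ℕ}

namespace Cn

variable {A : Submodule F (Matrix (Fin n) (Fin n) F)} {m : ℕ}
  {e : Fin m → Matrix (Fin n) (Fin n) F} {z : Fin m} {u : Fin m → Matrix (Fin n) (Fin n) F}

lemma sk_lift (h : Cn A m e z u) {s : Matrix (Fin n) (Fin n) F} (hs0 : s ≠ 0) (hst : sᵀ = -s)
    (hsr : s * e z = s)
    (hc : ∀ i j, ∀ a ∈ A, s * (u i * a * (u j)ᵀ) = (u i * a * (u j)ᵀ) * s) :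
    ∃ t : Matrix (Fin n) (Fin n) F, t ≠ 0 ∧ tᵀ = -t ∧ ∀ a ∈ A, t * a = a * t := by
  refine ⟨∑ k, (u k)ᵀ * s * u k, ?_, ?_, ?_⟩
  · intro h0
    apply hs0
    have : u z * (∑ k, (u k)ᵀ * s * u k) = s := by
      rw [Finset.mul_sum, Finset.sum_eq_single z, ← mul_assoc, ← mul_assoc, h.ut, h.uz, mul_assoc,
        hsr]
      · have := congrArg transpose hsr
        rw [transpose_mul, hst, h.fr.esym, mul_neg, neg_inj] at this
        exact this
      · intro k _ hk
        rw [← mul_assoc, ← mul_assoc, h.uo hk.symm]; simp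
      · simp
    rw [← this, h0, mul_zero]
  · rw [transpose_sum, ← Finset.sum_neg_distrib]
    refine Finset.sum_congr rfl fun k _ => ?_
    rw [transpose_mul, transpose_mul, transpose_transpose, hst, neg_mul, mul_neg, ← mul_assoc]
  · intro a ha
    obtain ⟨h1, h2⟩ := h.fr.unit a ha
    have hf : ∑ k, e k = ∑ k, (u k)ᵀ * u k := Finset.sum_congr rfl fun k _ => (h.tu k).symm
    rw [hf] at h1 h2
    conv_lhs => rw [← h2]
    conv_rhs => rw [← h1]
    simp only [Finset.sum_mul, Finset.mul_sum]
    refine Finset.sum_congr rfl fun i _ => Finset.sum_congr rfl fun k _ => ?_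
    have e1 : (u k)ᵀ * s * u k * (a * ((u i)ᵀ * u i))
      = (u k)ᵀ * (s * (u k * a * (u i)ᵀ)) * u i := by noncomm_ring
    have e2 : (u k)ᵀ * u k * a * ((u i)ᵀ * s * u i)
      = (u k)ᵀ * ((u k * a * (u i)ᵀ) * s) * u i := by noncomm_ring
    rw [e1, e2, hc k i a ha]

/-- coordinate space -/
def DD (A : Submodule F (Matrix (Fin n) (Fin n) F)) {m : ℕ}
    (e : Fin m → Matrix (Fin n) (Fin n) F) (z : Fin m) (u : Fin m → Matrix (Fin n) (Fin n) F)
    (j : Fin m) : Submodule F (Matrix (Fin n) (Fin n) F) :=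
  (Y A e z j).map (LinearMap.mulRight F (u j)ᵀ)

lemma mem_DD {x : Matrix (Fin n) (Fin n) F} {j : Fin m} :
    x ∈ DD A e z u j ↔ ∃ y ∈ Y A e z j, x = y * (u j)ᵀ := by
  unfold DD
  simp only [Submodule.mem_map, LinearMap.mulRight_apply]
  exact ⟨fun ⟨a, h, h'⟩ => ⟨a, h, h'.symm⟩, fun ⟨a, h, h'⟩ => ⟨a, h, h'.symm⟩⟩

lemma DDu (h : Cn A m e z u) {x : Matrix (Fin n) (Fin n) F} {j : Fin m}
    (hx : x ∈ DD A e z u j) : x * u j ∈ Y A e z j := by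
  obtain ⟨y, hy, rfl⟩ := mem_DD.mp hx
  rw [mul_assoc, h.tu, h.fr.Yr hy]; exact hy

lemma ca (h : Cn A m e z u) {j : Fin m} (hj : z ≠ j) : CA (DD A e z u j) (e z) where
  two := h.fr.two
  sym := h.fr.esym z
  idem := h.fr.idem z
  ne := h.fr.ne z
  mem := mem_DD.mpr ⟨u j, h.uY j, (h.ut j).symm⟩
  l := by
    intro x hx
    obtain ⟨y, hy, rfl⟩ := mem_DD.mp hx
    rw [← mul_assoc, h.fr.Yl hy]
  r := by
    intro x hx
    obtain ⟨y, hy, rfl⟩ := mem_DD.mp hx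
    rw [mul_assoc, h.tr]
  tr := by
    intro x hx
    obtain ⟨y, hy, rfl⟩ := mem_DD.mp hx
    obtain ⟨c, hc⟩ := h.fr.Yq hy (h.uY j)
    refine ⟨c, ?_⟩
    rw [transpose_mul, transpose_transpose]; exact hc
  nd := by
    intro x hx hw
    obtain ⟨y, hy, rfl⟩ := mem_DD.mp hx
    rw [h.fr.Ynd hj hy, zero_mul]
    intro v hv
    have := hw _ (mem_DD.mpr ⟨v, hv, rfl⟩)
    simp only [transpose_mul, transpose_transpose] at this
    have e1 : y * (u j)ᵀ * (u j * vᵀ) = y * ((u j)ᵀ * u j) * vᵀ := by noncomm_ring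
    have e2 : v * (u j)ᵀ * (u j * yᵀ) = v * ((u j)ᵀ * u j) * yᵀ := by noncomm_ring
    rw [e1, e2, h.tu, h.fr.Yr hy, h.fr.Yr hv] at this
    exact this

lemma DD_le (h : Cn A m e z u) {j k : Fin m} (hj : z ≠ j) (hk : z ≠ k) :
    DD A e z u k ≤ DD A e z u j := by
  intro x hx
  obtain ⟨y, hy, rfl⟩ := mem_DD.mp hx
  refine mem_DD.mpr ⟨y * ((u k)ᵀ * u j), h.fr.Ymul hk hj hy (h.uu k j), ?_⟩
  rw [mul_assoc, mul_assoc, h.ut, h.tr]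

lemma block' (h : Cn A m e z u) {j : Fin m} (hj : z ≠ j) (i k : Fin m) (hk : z ≠ k)
    {a : Matrix (Fin n) (Fin n) F} (ha : a ∈ A) : u i * a * (u k)ᵀ ∈ DD A e z u j := by
  apply h.DD_le hj hk
  refine mem_DD.mpr ⟨u i * (e i * a * e k), ?_, ?_⟩
  · have hm : e i * a * e k ∈ Y A e i k := mem_Y.mpr ⟨a, ha, rfl⟩
    by_cases hi : z = i
    · subst hi
      rw [h.uz, h.fr.Yl hm]; exact hm
    · exact h.fr.Ymul hi hk (h.uY i) hm
  · have : u i * (e i * a * e k) * (u k)ᵀ = (u i * e i) * a * (e k * (u k)ᵀ) := by noncomm_ring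
    rw [this, h.er, h.tl]

lemma block (h : Cn A m e z u) {j : Fin m} (hj : z ≠ j) (i k : Fin m)
    {a : Matrix (Fin n) (Fin n) F} (ha : a ∈ A) : u i * a * (u k)ᵀ ∈ DD A e z u j := by
  by_cases hk : z = k
  · by_cases hi : z = i
    · subst hk; subst hi
      obtain ⟨c, hc⟩ := h.fr.prim z a ha
      rw [h.uz, h.fr.esym, hc]
      exact Submodule.smul_mem _ _ (h.ca hj).mem
    · have := (h.ca hj).t (h.block' hj k i hi ha)
      rw [transpose_mul, transpose_mul, transpose_transpose, h.fr.sym a ha, ← mul_assoc] at this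
      exact this
  · exact h.block' hj i k hk ha

lemma DD_mul (h : Cn A m e z u) {j k : Fin m} (hj : z ≠ j) (hk : z ≠ k) (hjk : j ≠ k) :
    ∀ x ∈ DD A e z u j, ∀ w ∈ DD A e z u j, x * w ∈ DD A e z u j := by
  intro x hx w hw
  obtain ⟨y, hy, rfl⟩ := mem_DD.mp hx
  obtain ⟨v, hv, rfl⟩ := mem_DD.mp (h.DD_le hk hj hw)
  apply h.DD_le hj hk
  refine mem_DD.mpr ⟨y * ((u j)ᵀ * v), ?_, by noncomm_ring⟩
  exact h.fr.Ymul hj hk hy (h.fr.Ymul hj.symm hjk (h.fr.Yt (h.uY j)) hv)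

lemma DD_comm (h : Cn A m e z u) {j : Fin m} (hj : z ≠ j) (hr : (e z).rank = 2) :
    ∀ x ∈ DD A e z u j, ∀ w ∈ DD A e z u j, x * w = w * x := by
  obtain ⟨v, hv, hvv⟩ := exists_noniso h.fr.two (h.fr.esym z) (h.fr.idem z) (h.fr.ne z)
  let φ : DD A e z u j →ₗ[F] LinearMap.range (e z).mulVecLin :=
    (e z).mulVecLin.rangeRestrict ∘ₗ ev v ∘ₗ (DD A e z u j).subtype
  have hφ : Function.Injective φ := by
    rw [← LinearMap.ker_eq_bot, LinearMap.ker_eq_bot']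
    intro x hx
    have h1 : e z *ᵥ (x.1 *ᵥ v) = 0 := congrArg Subtype.val hx
    rw [mulVec_mulVec, (h.ca hj).l _ x.2] at h1
    obtain ⟨x, hxD⟩ := x
    obtain ⟨y, hy, rfl⟩ := mem_DD.mp hxD
    have : y = 0 := by
      refine h.zero_of hj hy (v := (u j)ᵀ *ᵥ v) ?_ ?_ ?_
      · rw [mulVec_mulVec, h.tl]
      · rw [dotProduct_mulVec, vecMul_transpose, mulVec_mulVec, h.ut, hv]; exact hvv
      · rw [mulVec_mulVec]; exact h1
    ext1
    simp [this]
  have hd : Module.finrank F (DD A e z u j) ≤ 2 := by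
    have := LinearMap.finrank_le_finrank_of_injective hφ
    change _ ≤ (e z).rank at this
    omega
  intro x hx w hw
  have hE := (h.ca hj).mem
  have hli : ¬ LinearIndependent F (![⟨e z, hE⟩, ⟨x, hx⟩, ⟨w, hw⟩] : Fin 3 → DD A e z u j) := by
    intro hl
    have := hl.fintype_card_le_finrank
    simp only [Fintype.card_fin] at this
    omega
  rw [Fintype.not_linearIndependent_iff] at hli
  obtain ⟨g, hg, i, hi⟩ := hli
  have hg := congrArg Subtype.val hg
  simp only [Fin.sum_univ_three] at hg
  have hg : g 0 • e z + g 1 • x + g 2 • w = 0 := hg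
  have lx := (h.ca hj).l x hx
  have rx := (h.ca hj).r x hx
  have lw := (h.ca hj).l w hw
  have rw' := (h.ca hj).r w hw
  have c1 : g 2 • (x * w - w * x) = 0 := by
    have a1 := congrArg (fun t => x * t) hg
    have a2 := congrArg (fun t => t * x) hg
    simp only [mul_add, add_mul, mul_smul_comm, smul_mul_assoc, lx, rx, mul_zero, zero_mul] at a1 a2
    rw [smul_sub, ← sub_eq_zero.mpr (a1.trans a2.symm)]; abel
  have c2 : g 1 • (x * w - w * x) = 0 := by
    have a1 := congrArg (fun t => t * w) hg
    have a2 := congrArg (fun t => w * t) hg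
    simp only [mul_add, add_mul, mul_smul_comm, smul_mul_assoc, lw, rw', mul_zero, zero_mul] at a1 a2
    rw [smul_sub, ← sub_eq_zero.mpr (a1.trans a2.symm)]; abel
  by_contra hne
  have hne' : x * w - w * x ≠ 0 := sub_ne_zero.mpr hne
  have g2 := (smul_eq_zero.mp c1).resolve_right hne'
  have g1 := (smul_eq_zero.mp c2).resolve_right hne'
  rw [g1, g2, zero_smul, zero_smul, add_zero, add_zero] at hg
  have g0 := (smul_eq_zero.mp hg).resolve_right (h.fr.ne z)
  fin_cases i
  · exact hi g0
  · exact hi g1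
  · exact hi g2

lemma exists_skew_corner (h : Cn A m e z u) (hr : 2 ≤ (e z).rank) :
    ∃ s : Matrix (Fin n) (Fin n) F, s ≠ 0 ∧ sᵀ = -s ∧ e z * s = s ∧ s * e z = s := by
  obtain ⟨v, hv, hvv⟩ := exists_noniso h.fr.two (h.fr.esym z) (h.fr.idem z) (h.fr.ne z)
  have hv0 : v ≠ 0 := by rintro rfl; simp at hvv
  obtain ⟨⟨w, x, hwx⟩, hw⟩ := exists_linearIndependent_pair_of_one_lt_finrank
    (show 1 < Module.finrank F (LinearMap.range (e z).mulVecLin) from hr)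
    (x := ⟨v, v, by rw [mulVecLin_apply, hv]⟩) (fun hh => hv0 (congrArg Subtype.val hh))
  have hw' : e z *ᵥ w = w := by
    rw [← hwx, mulVecLin_apply, mulVec_mulVec, h.fr.idem]
  have key : ∀ p q : Fin n → F, e z *ᵥ p = p → e z * vecMulVec p q = vecMulVec p q :=
    fun p q hp => by rw [mul_vecMulVec, hp]
  have hl : e z * (vecMulVec v w - vecMulVec w v) = vecMulVec v w - vecMulVec w v := by
    rw [mul_sub, key _ _ hv, key _ _ hw']
  have ht : (vecMulVec v w - vecMulVec w v)ᵀ = -(vecMulVec v w - vecMulVec w v) := by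
    rw [transpose_sub, transpose_vecMulVec, transpose_vecMulVec, neg_sub]
  refine ⟨_, ?_, ht, hl, ?_⟩
  · intro h0
    rw [LinearIndependent.pair_iff] at hw
    obtain ⟨k, hk⟩ := Function.ne_iff.mp hv0
    have hk : v k ≠ 0 := hk
    have := hw (w k) (-(v k)) (by
      ext i
      have := congrFun (congrFun h0 i) k
      simp [vecMulVec_apply] at this
      simp
      linear_combination this)
    exact hk (neg_eq_zero.mp this.2)
  · have := congrArg transpose hl
    rw [transpose_mul, ht, h.fr.esym, neg_mul, neg_inj] at this
    exact this

lemma exists_skew [IsAlgClosed F] (h : Cn A m e z u) (hr : 2 ≤ (e z).rank)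
    (hn : n ≤ Module.finrank F A) :
    ∃ t : Matrix (Fin n) (Fin n) F, t ≠ 0 ∧ tᵀ = -t ∧ ∀ a ∈ A, t * a = a * t := by
  have h1 := h.finrank_le
  have h3 := h.mr_le
  have hm : 2 ≤ m := by
    by_contra hc
    have : m = 1 := by have := z.pos; omega
    rw [this] at h1 h3
    simp at h1 h3
    omega
  have hm2 : m = 2 → (e z).rank = 2 := by
    intro hm
    rw [hm] at h1 h3
    norm_num at h1 h3
    omega
  obtain ⟨j, hj⟩ : ∃ j : Fin m, z ≠ j := by
    have : Nontrivial (Fin m) := Fin.nontrivial_iff_two_le.mpr hm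
    obtain ⟨j, hj⟩ := exists_ne z
    exact ⟨j, hj.symm⟩
  have key : ∃ s : Matrix (Fin n) (Fin n) F, s ≠ 0 ∧ sᵀ = -s ∧ e z * s = s ∧ s * e z = s ∧
      ∀ w ∈ DD A e z u j, s * w = w * s := by
    have ca := h.ca hj
    by_cases hx : ∃ x ∈ DD A e z u j, xᵀ = -x ∧ x ≠ 0
    · obtain ⟨x, hx, hxt, hx0⟩ := hx
      by_cases hm' : m = 2
      · exact ⟨x, hx0, hxt, ca.l x hx, ca.r x hx, h.DD_comm hj (hm2 hm') x hx⟩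
      · obtain ⟨k, hk⟩ : ∃ k : Fin m, k ∉ ({z, j} : Finset (Fin m)) := by
          by_contra hc
          push Not at hc
          have : (Finset.univ : Finset (Fin m)).card ≤ ({z, j} : Finset (Fin m)).card :=
            Finset.card_le_card fun k _ => hc k
          have h5 := Finset.card_le_two (a := z) (b := j)
          rw [Finset.card_univ, Fintype.card_fin] at this
          omega
        simp only [Finset.mem_insert, Finset.mem_singleton, not_or] at hk
        exact ca.exists_s (h.DD_mul hj (Ne.symm hk.1) (Ne.symm hk.2)) hx hxt hx0
    · push Not at hx
      obtain ⟨s, h5, h6, h7, h8⟩ := h.exists_skew_corner hr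
      refine ⟨s, h5, h6, h7, h8, fun w hw => ?_⟩
      obtain ⟨c, y, hy, hyt, rfl⟩ := ca.skew_part hw
      rw [hx y hy hyt, add_zero, mul_smul_comm, smul_mul_assoc, h7, h8]
  obtain ⟨s, h5, h6, h7, h8, h9⟩ := key
  exact h.sk_lift h5 h6 h8 fun i k a ha => h9 _ (h.block hj i k ha)

end Cn

lemma exists_ker {f : Matrix (Fin n) (Fin n) F} (hi : f * f = f) (hf : f ≠ 1) :
    ∃ v, v ≠ 0 ∧ f *ᵥ v = 0 := by
  by_contra hc
  push Not at hc
  apply hf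
  refine Matrix.ext_of_mulVec_single fun i => ?_
  by_contra hne
  refine hc (f *ᵥ Pi.single i 1 - (1 : Matrix (Fin n) (Fin n) F) *ᵥ Pi.single i 1)
    (sub_ne_zero.mpr hne) ?_
  rw [mulVec_sub, mulVec_mulVec, hi, one_mulVec, sub_self]

namespace Cn

variable {A : Submodule F (Matrix (Fin n) (Fin n) F)} {m : ℕ}
  {e : Fin m → Matrix (Fin n) (Fin n) F} {z : Fin m} {u : Fin m → Matrix (Fin n) (Fin n) F}

lemma ker_vec (h : Cn A m e z u) (hf : ∑ i, e i ≠ 1) :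
    ∃ v : Fin n → F, v ≠ 0 ∧ ∀ a ∈ A, a *ᵥ v = 0 := by
  obtain ⟨v, hv, hv'⟩ := exists_ker (h.fr.unit _ (A.sum_mem fun i _ => h.fr.mem i)).1 hf
  refine ⟨v, hv, fun a ha => ?_⟩
  rw [← (h.fr.unit a ha).2, ← mulVec_mulVec, hv', mulVec_zero]

end Cn

lemma main_aux [IsAlgClosed F] {A B : Submodule F (Matrix (Fin n) (Fin n) F)}
    (hAle : A ≤ symSub F n) (hBle : B ≤ symSub F n)
    (hAp : A ≠ symSub F n) (hBp : B ≠ symSub F n)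
    {m : ℕ} {e : Fin m → Matrix (Fin n) (Fin n) F} {z : Fin m}
    {u : Fin m → Matrix (Fin n) (Fin n) F} (hA : Cn A m e z u)
    {m' : ℕ} {e' : Fin m' → Matrix (Fin n) (Fin n) F} {z' : Fin m'}
    {u' : Fin m' → Matrix (Fin n) (Fin n) F} (hB : Cn B m' e' z' u')
    (hf : ∑ i, e i = 1) (hAB : A ⊔ B = symSub F n) : False := by
  have hrA : 2 ≤ (e z).rank := by
    by_contra hc
    have := hA.rank_pos
    exact hAp (le_antisymm hAle (hA.top_of_rank_one (by omega) hf))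
  have dA := hA.dim_lt hrA
  by_cases hrB : 2 ≤ (e' z').rank
  · have dB := hB.dim_lt hrB
    have := Submodule.finrank_add_le_finrank_add_finrank A B
    rw [hAB] at this
    omega
  have hrB1 : (e' z').rank = 1 := by
    have := hB.rank_pos
    omega
  have hfB : ∑ i, e' i ≠ 1 := fun hc =>
    hBp (le_antisymm hBle (hB.top_of_rank_one hrB1 hc))
  obtain ⟨v, hv, hvB⟩ := hB.ker_vec hfB
  have hX : ∀ X : Matrix (Fin n) (Fin n) F, Xᵀ = X → ∃ a ∈ A, X *ᵥ v = a *ᵥ v := by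
    intro X hX
    have : X ∈ A ⊔ B := hAB ▸ hX
    obtain ⟨a, ha, b, hb, rfl⟩ := Submodule.mem_sup.mp this
    exact ⟨a, ha, by rw [add_mulVec, hvB b hb, add_zero]⟩
  have hW : ∀ w, ∃ a ∈ A, a *ᵥ v = w := by
    intro w
    obtain ⟨X, hXs, rfl⟩ := sym_trans hv w
    obtain ⟨a, ha, h⟩ := hX X hXs
    exact ⟨a, ha, h.symm⟩
  have hn : n ≤ Module.finrank F A := by
    have hs : Function.Surjective (ev v ∘ₗ A.subtype) := by
      intro w
      obtain ⟨a, ha, h⟩ := hW w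
      exact ⟨⟨a, ha⟩, h⟩
    have := LinearMap.finrank_le_finrank_of_surjective hs
    simpa using this
  obtain ⟨s, hs0, hst, hsA⟩ := hA.exists_skew hrA hn
  have hsv : s *ᵥ v = 0 := by
    refine sym_zero hv fun X hXs => ?_
    obtain ⟨a, ha, h⟩ := hX X hXs
    rw [h]
    have h1 : (s *ᵥ v) ⬝ᵥ (a *ᵥ v) = -(v ⬝ᵥ ((s * a) *ᵥ v)) := by
      rw [← mulVec_mulVec, dotProduct_mulVec v, ← mulVec_transpose, hst, neg_mulVec,
        neg_dotProduct, neg_neg]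
    have h3 : (s * a)ᵀ = -(s * a) := by
      rw [transpose_mul, hst, hA.fr.sym a ha, mul_neg, hsA a ha]
    have h4 : v ⬝ᵥ ((s * a) *ᵥ v) = -(v ⬝ᵥ ((s * a) *ᵥ v)) := by
      conv_lhs => rw [dotProduct_mulVec, ← mulVec_transpose, h3, neg_mulVec, neg_dotProduct,
        dotProduct_comm]
    have h5 : (2 : F) * (v ⬝ᵥ ((s * a) *ᵥ v)) = 0 := by linear_combination h4
    rw [h1, (mul_eq_zero.mp h5).resolve_left hA.fr.two, neg_zero]
  apply hs0
  refine Matrix.ext_of_mulVec_single fun i => ?_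
  obtain ⟨a, ha, h⟩ := hW (Pi.single i 1)
  rw [← h, mulVec_mulVec, hsA a ha, ← mulVec_mulVec, hsv, mulVec_zero, zero_mulVec]

end Skew


/-- over an algebraically closed field of characteristic `≠ 2`, the Jordan
algebra `H(F_n)` of symmetric `n×n` matrices is not the sum of two proper simple Jordan
subalgebras. -/
theorem HFn_not_sum_of_two_proper_simple
    (F : Type*) [Field F] [IsAlgClosed F] (hF : ringChar F ≠ 2)
    (n : ℕ) (hn : 1 ≤ n)
    (A B : Submodule F (Matrix (Fin n) (Fin n) F))
    (hAle : A ≤ symSub F n) (hBle : B ≤ symSub F n)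
    (hAcl : ∀ x ∈ A, ∀ y ∈ A, jp x y ∈ A) (hBcl : ∀ x ∈ B, ∀ y ∈ B, jp x y ∈ B)
    (hAp : A ≠ symSub F n) (hBp : B ≠ symSub F n)
    (hAs : IsSimpleJordan F A) (hBs : IsSimpleJordan F B) :
    A ⊔ B ≠ symSub F n := by
  have h2 : (2 : F) ≠ 0 := Ring.two_ne_zero hF
  obtain ⟨m, e, z, u, hA⟩ := exists_Cn h2 hAcl hAle hAs
  obtain ⟨m', e', z', u', hB⟩ := exists_Cn h2 hBcl hBle hBs
  intro hAB
  by_cases hfA : ∑ i, e i = 1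
  · exact main_aux hAle hBle hAp hBp hA hB hfA hAB
  by_cases hfB : ∑ i, e' i = 1
  · exact main_aux hBle hAle hBp hAp hB hA hfB (by rw [sup_comm]; exact hAB)
  obtain ⟨v, hv, hvA⟩ := hA.ker_vec hfA
  obtain ⟨w, hw, hwB⟩ := hB.ker_vec hfB
  apply hv
  refine sym_zero hw fun X hX => ?_
  have : X ∈ A ⊔ B := hAB ▸ hX
  obtain ⟨a, ha, b, hb, rfl⟩ := Submodule.mem_sup.mp this
  rw [add_mulVec, hwB b hb, add_zero, dotProduct_mulVec, ← mulVec_transpose, hA.fr.sym a ha,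
    hvA a ha, zero_dotProduct]

end HFn
end

section
/- Let F be an algebraically closed field of characteristic zero, let V be a finite-dimensional F-vector space with a nondegenerate symmetric bilinear form f, and let v₀ ∈ V be a nonzero vector. Then for every w ∈ V there exists an F-linear operator T : V → V that is symmetric with respect to f (i.e. f(Tu, u') = f(u, Tu') for all u, u' ∈ V) such that T(v₀) = w. Equivalently, the set {T(v₀) : T symmetric with respect to f} equals V. -/
/-- for a nondegenerate symmetric bilinear form `f` on a
finite-dimensional vector space `V` over an algebraically closed field of characteristic
zero and a nonzero vector `v₀`, every vector `w` can be reached as `T(v₀)` for some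
linear operator `T` symmetric with respect to `f`. -/
theorem symmetric_operators_act_transitively
    (F : Type*) [Field F] [IsAlgClosed F] [CharZero F]
    (V : Type*) [AddCommGroup V] [Module F V] [FiniteDimensional F V]
    (f : V →ₗ[F] V →ₗ[F] F)
    (hsymm : ∀ u v : V, f u v = f v u)
    (hnd : ∀ v : V, (∀ u : V, f v u = 0) → v = 0)
    (v₀ : V) (hv₀ : v₀ ≠ 0) (w : V) :
    ∃ T : V →ₗ[F] V, (∀ u u' : V, f (T u) u' = f u (T u')) ∧ T v₀ = w := by
  obtain ⟨y, hy⟩ : ∃ y, f v₀ y ≠ 0 := by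
    by_contra h
    push Not at h
    exact hv₀ (hnd v₀ h)
  obtain ⟨x, hx⟩ : ∃ x, f x v₀ = 1 := by
    refine ⟨(f v₀ y)⁻¹ • y, ?_⟩
    rw [hsymm]
    simp [hy]
  refine ⟨(f x).smulRight w + (f w).smulRight x - f w v₀ • (f x).smulRight x, ?_, ?_⟩
  · intro u u'
    simp only [LinearMap.sub_apply, LinearMap.add_apply, LinearMap.smul_apply,
      LinearMap.smulRight_apply, map_sub, map_add, map_smul, smul_eq_mul]
    rw [hsymm u w, hsymm u x]
    ring
  · simp [hx]
end
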